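/- Fix θ ∈ Θ_M°. As |x| → ∞ the second-order parameter derivatives of the stable density satisfy: f_{σσ}(x;θ) = O(|x|^{−(1+α)}), f_{σα}(x;θ) = O(|x|^{−(1+α)} log|x|), f_{σβ}(x;θ) = O(|x|^{−(1+α)}), f_{αα}(x;θ) = O(|x|^{−(1+α)} log²|x|), f_{αβ}(x;θ) = O(|x|^{−(1+α)} log|x|), f_{ββ}(x;θ) = O(|x|^{−(1+α)}). -/

import Mathlib

open MeasureTheory Filter

noncomputable section

def ThetaInt : Set (Fin 4 → ℝ) :=
  {θ | 0 < θ 1 ∧ θ 2 ∈ Set.Ioo (0:ℝ) 2 ∧ θ 3 ∈ Set.Ioo (-1:ℝ) 1}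

/-- Cumulant (log characteristic function) of the continuous (M₀) parameterization,
with `θ = (μ, σ, α, β)`. -/
def psiM (θ : Fin 4 → ℝ) (t : ℝ) : ℂ :=
  if θ 2 = 1 then
    ((-(|θ 1 * t|) : ℝ) : ℂ)
      - Complex.I * (((2 * θ 3 / Real.pi) * (θ 1 * t) * Real.log |θ 1 * t| : ℝ) : ℂ)
      + Complex.I * ((θ 0 * t : ℝ) : ℂ)
  else
    ((-(|θ 1 * t| ^ (θ 2)) : ℝ) : ℂ) *
        (1 + Complex.I * ((θ 3 * Real.sign t * Real.tan (Real.pi * θ 2 / 2)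
            * (|θ 1 * t| ^ (1 - θ 2) - 1) : ℝ) : ℂ))
      + Complex.I * ((θ 0 * t : ℝ) : ℂ)

/-- Characteristic function of the (M₀) parameterization. -/
def phiM (θ : Fin 4 → ℝ) (t : ℝ) : ℂ := Complex.exp (psiM θ t)

/-- Stable density in the (M₀) parameterization, via Fourier inversion. -/
def fM (θ : Fin 4 → ℝ) (x : ℝ) : ℝ :=
  (1 / (2 * Real.pi)) *
    (∫ t : ℝ, Complex.exp (-Complex.I * (t : ℂ) * (x : ℂ)) * phiM θ t).re

/-- Partial derivative of the density in parameter `i`. -/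
def fP (i : Fin 4) (θ : Fin 4 → ℝ) (x : ℝ) : ℝ :=
  deriv (fun s => fM (Function.update θ i s) x) (θ i)

/-- Second partial derivative of the density in parameters `i`, `j`. -/
def fPP (i j : Fin 4) (θ : Fin 4 → ℝ) (x : ℝ) : ℝ :=
  deriv (fun s => fP i (Function.update θ j s) x) (θ j)

/-- Derivative of the density in `x`. -/
def fX (θ : Fin 4 → ℝ) (x : ℝ) : ℝ := deriv (fun y => fM θ y) x

/-- Mixed derivative `∂²f/∂x∂θᵢ`. -/
def fPX (i : Fin 4) (θ : Fin 4 → ℝ) (x : ℝ) : ℝ := deriv (fun y => fP i θ y) x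

/-- Score functions. -/
def ellP (i : Fin 4) (θ : Fin 4 → ℝ) (x : ℝ) : ℝ := fP i θ x / fM θ x

/-- Derivative of the score in `x`. -/
def ellPX (i : Fin 4) (θ : Fin 4 → ℝ) (x : ℝ) : ℝ := deriv (fun y => ellP i θ y) x

/-- Derivative of the score `ℓ_{θᵢ}` in the parameter `θⱼ`. -/
def ellPP (i j : Fin 4) (θ : Fin 4 → ℝ) (x : ℝ) : ℝ :=
  deriv (fun s => ellP i (Function.update θ j s) x) (θ j)

/-- `h = O(r)` as `|x| → ∞`. -/
def IsBigOAtInfty (h r : ℝ → ℝ) : Prop :=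
  ∃ c > 0, ∃ M > 0, ∀ x : ℝ, M ≤ |x| → |h x| ≤ c * r x


end

noncomputable section SymCalc

/-- Weight function. -/
def wt (a : ℝ) (k : ℕ) (N : ℝ) (t : ℝ) : ℝ := t ^ a * (1 + |Real.log t|) ^ k * (1 + t) ^ N

lemma wt_pos (a : ℝ) (k : ℕ) (N : ℝ) {t : ℝ} (ht : 0 < t) : 0 < wt a k N t := by
  unfold wt; positivity

lemma wt_mul (a : ℝ) (k : ℕ) (N : ℝ) (a' : ℝ) (k' : ℕ) (N' : ℝ) {t : ℝ} (ht : 0 < t) :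
    wt a k N t * wt a' k' N' t = wt (a + a') (k + k') (N + N') t := by
  unfold wt
  rw [Real.rpow_add ht, Real.rpow_add (by linarith : (0:ℝ) < 1 + t), pow_add]; ring

lemma wt_sub_one (a : ℝ) (k : ℕ) (N : ℝ) {t : ℝ} (ht : 0 < t) :
    wt (a - 1) k N t = t⁻¹ * wt a k N t := by
  unfold wt
  rw [Real.rpow_sub ht, Real.rpow_one]; ring

variable {ι : Type*}

/-- Uniform bound of a family by a weight. -/
def BdW (a : ℝ) (k : ℕ) (N : ℝ) (g : ι → ℝ → ℂ) : Prop :=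
  ∃ C : ℝ, ∀ i, ∀ t : ℝ, 0 < t → ‖g i t‖ ≤ C * wt a k N t

/-- Symbol class of order `n`. -/
def SymB : ℕ → ℝ → ℕ → ℝ → (ι → ℝ → ℂ) → Prop
  | 0, a, k, N, g => BdW a k N g
  | n + 1, a, k, N, g => BdW a k N g ∧ (∀ i, ∀ t : ℝ, 0 < t → DifferentiableAt ℝ (g i) t) ∧
      SymB n (a - 1) k N (fun i => deriv (g i))

lemma SymB.bd {n : ℕ} {a : ℝ} {k : ℕ} {N : ℝ} {g : ι → ℝ → ℂ} (h : SymB n a k N g) :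
    BdW a k N g := by
  cases n with
  | zero => exact h
  | succ n => exact h.1

lemma SymB.of_succ {n : ℕ} {a : ℝ} {k : ℕ} {N : ℝ} {g : ι → ℝ → ℂ} (h : SymB (n+1) a k N g) :
    SymB n a k N g := by
  induction n generalizing a g with
  | zero => exact h.1
  | succ n ih => exact ⟨h.1, h.2.1, ih h.2.2⟩

lemma SymB.congr {n : ℕ} {a : ℝ} {k : ℕ} {N : ℝ} {g g' : ι → ℝ → ℂ} (h : SymB n a k N g)
    (hg : ∀ i, ∀ t : ℝ, 0 < t → g' i t = g i t) : SymB n a k N g' := by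
  induction n generalizing a g g' with
  | zero =>
    obtain ⟨C, hC⟩ := h
    exact ⟨C, fun i t ht => by rw [hg i t ht]; exact hC i t ht⟩
  | succ n ih =>
    have he : ∀ i, ∀ t : ℝ, 0 < t → g' i =ᶠ[nhds t] g i := fun i t ht => by
      filter_upwards [lt_mem_nhds ht] with s hs using hg i s hs
    refine ⟨?_, fun i t ht => (h.2.1 i t ht).congr_of_eventuallyEq (he i t ht),
      ih h.2.2 fun i t ht => (he i t ht).deriv_eq⟩
    obtain ⟨C, hC⟩ := h.1
    exact ⟨C, fun i t ht => by rw [hg i t ht]; exact hC i t ht⟩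

/-- Constructor from explicit derivative. -/
lemma SymB.mk' {n : ℕ} {a : ℝ} {k : ℕ} {N : ℝ} {g g' : ι → ℝ → ℂ} (hb : BdW a k N g)
    (hd : ∀ i, ∀ t : ℝ, 0 < t → HasDerivAt (g i) (g' i t) t) (h : SymB n (a-1) k N g') :
    SymB (n+1) a k N g :=
  ⟨hb, fun i t ht => (hd i t ht).differentiableAt, h.congr fun i t ht => (hd i t ht).deriv⟩

lemma SymB.mono {n : ℕ} {a : ℝ} {k : ℕ} {N : ℝ} {a' : ℝ} {k' : ℕ} {N' : ℝ} {g : ι → ℝ → ℂ}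
    (h : SymB n a k N g) (D : ℝ) (hw : ∀ t : ℝ, 0 < t → wt a k N t ≤ D * wt a' k' N' t) :
    SymB n a' k' N' g := by
  have key : ∀ (b b' : ℝ) (g : ι → ℝ → ℂ), 
      (∀ t : ℝ, 0 < t → wt b k N t ≤ D * wt b' k' N' t) → BdW b k N g → BdW b' k' N' g := by
    rintro b b' g hw ⟨C, hC⟩
    refine ⟨|C| * D, fun i t ht => (hC i t ht).trans ?_⟩
    have h1 := hw t ht
    have h2 := wt_pos b k N ht
    calc C * wt b k N t ≤ |C| * wt b k N t := by gcongr; exact le_abs_self C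
      _ ≤ |C| * (D * wt b' k' N' t) := by gcongr
      _ = _ := by ring
  induction n generalizing a a' g with
  | zero => exact key _ _ _ hw h
  | succ n ih =>
    refine ⟨key _ _ _ hw h.1, h.2.1, ih h.2.2 fun t ht => ?_⟩
    rw [wt_sub_one _ _ _ ht, wt_sub_one _ _ _ ht]
    have := hw t ht
    have h3 : 0 < t⁻¹ := by positivity
    calc t⁻¹ * wt a k N t ≤ t⁻¹ * (D * wt a' k' N' t) := by gcongr
      _ = _ := by ring

lemma BdW.add {a : ℝ} {k : ℕ} {N : ℝ} {g g' : ι → ℝ → ℂ} (h : BdW a k N g) (h' : BdW a k N g') :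
    BdW a k N (fun i t => g i t + g' i t) := by
  obtain ⟨C, hC⟩ := h
  obtain ⟨C', hC'⟩ := h'
  refine ⟨C + C', fun i t ht => (norm_add_le _ _).trans ?_⟩
  rw [add_mul]; exact add_le_add (hC i t ht) (hC' i t ht)

lemma BdW.mul {a : ℝ} {k : ℕ} {N : ℝ} {a' : ℝ} {k' : ℕ} {N' : ℝ} {g g' : ι → ℝ → ℂ}
    (h : BdW a k N g) (h' : BdW a' k' N' g') :
    BdW (a+a') (k+k') (N+N') (fun i t => g i t * g' i t) := by
  obtain ⟨C, hC⟩ := h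
  obtain ⟨C', hC'⟩ := h'
  refine ⟨C * C', fun i t ht => ?_⟩
  rw [norm_mul, ← wt_mul _ _ _ _ _ _ ht]
  have := mul_le_mul (hC i t ht) (hC' i t ht) (norm_nonneg _) ((norm_nonneg _).trans (hC i t ht))
  calc _ ≤ _ := this
    _ = _ := by ring

lemma SymB.add {n : ℕ} {a : ℝ} {k : ℕ} {N : ℝ} {g g' : ι → ℝ → ℂ} (h : SymB n a k N g)
    (h' : SymB n a k N g') : SymB n a k N (fun i t => g i t + g' i t) := by
  induction n generalizing a g g' with
  | zero => exact BdW.add h h'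
  | succ n ih =>
    exact SymB.mk' (BdW.add h.1 h'.1) (fun i t ht => (h.2.1 i t ht).hasDerivAt.add
      (h'.2.1 i t ht).hasDerivAt) (ih h.2.2 h'.2.2)

lemma SymB.mul {n : ℕ} {a : ℝ} {k : ℕ} {N : ℝ} {a' : ℝ} {k' : ℕ} {N' : ℝ} {g g' : ι → ℝ → ℂ}
    (h : SymB n a k N g) (h' : SymB n a' k' N' g') :
    SymB n (a+a') (k+k') (N+N') (fun i t => g i t * g' i t) := by
  induction n generalizing a a' g g' with
  | zero => exact BdW.mul h h'
  | succ n ih =>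
    refine SymB.mk' (BdW.mul h.1 h'.1) (fun i t ht => (h.2.1 i t ht).hasDerivAt.mul
      (h'.2.1 i t ht).hasDerivAt) (SymB.add ?_ ?_)
    · have := ih h.2.2 h'.of_succ
      rwa [show a - 1 + a' = a + a' - 1 by ring] at this
    · have := ih h.of_succ h'.2.2
      rwa [show a + (a' - 1) = a + a' - 1 by ring] at this

lemma SymB.zero (n : ℕ) (a : ℝ) (k : ℕ) (N : ℝ) : SymB n a k N (fun (_ : ι) (_ : ℝ) => (0:ℂ)) := by
  induction n generalizing a with
  | zero => exact ⟨0, fun i t ht => by simp⟩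
  | succ n ih =>
    exact SymB.mk' ⟨0, fun i t ht => by simp⟩ (fun i t ht => hasDerivAt_const t 0) (ih _)

lemma SymB.const (n : ℕ) (c : ℂ) : SymB n 0 0 0 (fun (_ : ι) (_ : ℝ) => c) := by
  have hb : BdW 0 0 0 (fun (_ : ι) (_ : ℝ) => c) := ⟨‖c‖, fun i t ht => by simp [wt]⟩
  cases n with
  | zero => exact hb
  | succ n => exact SymB.mk' hb (fun i t ht => hasDerivAt_const t c) (SymB.zero _ _ _ _)

lemma SymB.const_mul {n : ℕ} {a : ℝ} {k : ℕ} {N : ℝ} {g : ι → ℝ → ℂ} (c : ℂ)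
    (h : SymB n a k N g) : SymB n a k N (fun i t => c * g i t) := by
  simpa using (SymB.const n c).mul h

lemma SymB.neg {n : ℕ} {a : ℝ} {k : ℕ} {N : ℝ} {g : ι → ℝ → ℂ}
    (h : SymB n a k N g) : SymB n a k N (fun i t => - g i t) := by
  simpa using h.const_mul (-1)

lemma SymB.sub {n : ℕ} {a : ℝ} {k : ℕ} {N : ℝ} {g g' : ι → ℝ → ℂ} (h : SymB n a k N g)
    (h' : SymB n a k N g') : SymB n a k N (fun i t => g i t - g' i t) := by
  simpa [sub_eq_add_neg] using h.add h'.neg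

lemma SymB.rpow (n : ℕ) (a : ℝ) : SymB n a 0 0 (fun (_ : ι) (t : ℝ) => ((t ^ a : ℝ) : ℂ)) := by
  have hb : ∀ a, BdW a 0 0 (fun (_ : ι) (t : ℝ) => ((t ^ a : ℝ) : ℂ)) := fun a =>
    ⟨1, fun i t ht => by 
      rw [Complex.norm_real, Real.norm_of_nonneg (by positivity)]; simp [wt]⟩
  induction n generalizing a with
  | zero => exact hb a
  | succ n ih =>
    refine SymB.mk' (hb a) (g' := fun i t => (a:ℂ) * ((t ^ (a-1) : ℝ) : ℂ)) (fun i t ht => ?_)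
      ((ih (a-1)).const_mul (a:ℂ))
    have := (Real.hasDerivAt_rpow_const (x := t) (p := a) (Or.inl ht.ne')).ofReal_comp
    simpa using this

lemma wt_mono_k (a : ℝ) {k k' : ℕ} (hk : k ≤ k') {N N' : ℝ} (hN : N ≤ N') {t : ℝ} (ht : 0 < t) :
    wt a k N t ≤ 1 * wt a k' N' t := by
  unfold wt
  have := abs_nonneg (Real.log t)
  rw [one_mul]
  gcongr <;> linarith

lemma SymB.mono_k {n : ℕ} {a : ℝ} {k k' : ℕ} {N N' : ℝ} {g : ι → ℝ → ℂ} (h : SymB n a k N g)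
    (hk : k ≤ k') (hN : N ≤ N') : SymB n a k' N' g :=
  h.mono 1 fun _ ht => wt_mono_k a hk hN ht

/-- Losing exponent in `t` absorbs logs. -/
lemma wt_mono_a {a a' : ℝ} (h : a' < a) (k : ℕ) (N : ℝ) :
    ∃ D, ∀ t : ℝ, 0 < t → wt a k N t ≤ D * wt a' 0 (N + 2 * (a - a')) t := by
  set δ := a - a' with hδ
  have hδ0 : 0 < δ := by linarith
  refine ⟨(k.factorial * Real.exp δ / δ ^ k) * 2, fun t ht => ?_⟩
  have h1 : (1 + |Real.log t|) ^ k ≤ k.factorial * Real.exp δ / δ ^ k * (t ^ δ + t ^ (-δ)) := by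
    have e1 := Real.pow_div_factorial_le_exp (x := δ * (1 + |Real.log t|)) (by positivity) k
    have e2 : Real.exp (δ * (1 + |Real.log t|)) ≤ Real.exp δ * (t ^ δ + t ^ (-δ)) := by
      rw [mul_add, mul_one, Real.exp_add, Real.rpow_def_of_pos ht, Real.rpow_def_of_pos ht]
      gcongr
      rcases abs_cases (Real.log t) with ⟨h, _⟩ | ⟨h, _⟩ <;> rw [h]
      · rw [mul_comm]; linarith [Real.exp_pos (Real.log t * -δ)]
      · rw [show δ * -Real.log t = Real.log t * -δ by ring]; linarith [Real.exp_pos (Real.log t * δ)]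
    rw [div_le_iff₀ (by positivity), mul_pow] at e1
    rw [div_mul_eq_mul_div, le_div_iff₀ (by positivity)]
    calc _ = δ ^ k * (1 + |Real.log t|) ^ k := by ring
      _ ≤ _ := e1
      _ ≤ (Real.exp δ * (t ^ δ + t ^ (-δ))) * k.factorial := by gcongr
      _ = _ := by ring
  have h2 : t ^ δ * (t ^ δ + t ^ (-δ)) ≤ 2 * (1 + t) ^ (2 * δ) := by
    rw [mul_add, ← Real.rpow_add ht, ← Real.rpow_add ht, add_neg_cancel, Real.rpow_zero, ← two_mul]
    have : t ^ (2 * δ) ≤ (1 + t) ^ (2 * δ) := by gcongr; linarith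
    have : 1 ≤ (1 + t) ^ (2 * δ) := Real.one_le_rpow (by linarith) (by positivity)
    linarith
  unfold wt
  rw [show t ^ a = t ^ a' * t ^ δ by rw [← Real.rpow_add ht]; congr 1; rw [hδ]; ring,
    Real.rpow_add (by linarith : (0:ℝ) < 1 + t)]
  calc t ^ a' * t ^ δ * (1 + |Real.log t|) ^ k * (1 + t) ^ N 
      ≤ t ^ a' * t ^ δ * (k.factorial * Real.exp δ / δ ^ k * (t ^ δ + t ^ (-δ))) * (1 + t) ^ N := by
        gcongr
    _ = t ^ a' * (k.factorial * Real.exp δ / δ ^ k) * (t ^ δ * (t ^ δ + t ^ (-δ))) * (1 + t) ^ N := by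
        ring
    _ ≤ t ^ a' * (k.factorial * Real.exp δ / δ ^ k) * (2 * (1 + t) ^ (2 * δ)) * (1 + t) ^ N := by
        gcongr
    _ = _ := by ring

lemma SymB.mono_a {n : ℕ} {a a' : ℝ} {k : ℕ} {N : ℝ} {g : ι → ℝ → ℂ} (h : SymB n a k N g)
    (ha : a' < a) : SymB n a' 0 (N + 2 * (a - a')) g := by
  obtain ⟨D, hD⟩ := wt_mono_a ha k N
  exact h.mono D hD

lemma SymB.mono_a_le {n : ℕ} {a a' : ℝ} {N : ℝ} {g : ι → ℝ → ℂ} (h : SymB n a 0 N g)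
    (ha : a' ≤ a) : SymB n a' 0 (N + 2 * (a - a')) g := by
  rcases ha.eq_or_lt with rfl | h'
  · simpa using h
  · exact h.mono_a h'

lemma SymB.log (n : ℕ) : SymB n 0 1 0 (fun (_ : ι) (t : ℝ) => ((Real.log t : ℝ) : ℂ)) := by
  have hb : BdW 0 1 0 (fun (_ : ι) (t : ℝ) => ((Real.log t : ℝ) : ℂ)) :=
    ⟨1, fun i t ht => by rw [Complex.norm_real, Real.norm_eq_abs]; simp [wt]⟩
  cases n with
  | zero => exact hb
  | succ n =>
    refine SymB.mk' hb (fun i t ht => (Real.hasDerivAt_log ht.ne').ofReal_comp) ?_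
    have := ((SymB.rpow (ι := ι) n (-1)).mono_k (Nat.zero_le 1) (le_refl 0))
    rw [zero_sub]
    refine this.congr fun i t ht => ?_
    rw [Real.rpow_neg_one]

lemma SymB.logpow (n m : ℕ) : SymB n 0 m 0 (fun (_ : ι) (t : ℝ) => ((Real.log t : ℝ) : ℂ) ^ m) := by
  induction m with
  | zero => simpa using SymB.const n 1
  | succ m ih => simpa [pow_succ] using ih.mul (SymB.log n)

lemma SymB.id (n : ℕ) : SymB n 1 0 0 (fun (_ : ι) (t : ℝ) => (t : ℂ)) :=
  (SymB.rpow n 1).congr fun i t ht => by rw [Real.rpow_one]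

end SymCalc

noncomputable section SymExp

variable {ι : Type*}

lemma one_add_log_pow_le (k : ℕ) {δ : ℝ} (hδ : 0 < δ) :
    ∃ D : ℝ, 0 < D ∧ ∀ t : ℝ, 1 ≤ t → (1 + |Real.log t|) ^ k ≤ D * t ^ δ := by
  refine ⟨k.factorial * Real.exp δ / δ ^ k, by positivity, fun t ht => ?_⟩
  have ht0 : 0 < t := by linarith
  have e1 := Real.pow_div_factorial_le_exp (x := δ * (1 + |Real.log t|)) (by positivity) k
  have e2 : Real.exp (δ * (1 + |Real.log t|)) = Real.exp δ * t ^ δ := by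
    rw [mul_add, mul_one, Real.exp_add, Real.rpow_def_of_pos ht0, abs_of_nonneg (Real.log_nonneg ht),
      mul_comm δ]
  rw [div_le_iff₀ (by positivity), mul_pow, e2] at e1
  rw [div_mul_eq_mul_div, le_div_iff₀ (by positivity)]
  linarith

lemma SymB.exp {n : ℕ} {b N0 : ℝ} {ψ : ι → ℝ → ℂ} (hb : 0 ≤ b) (hψ : SymB n b 0 N0 ψ)
    (hφ : ∀ N, BdW 0 0 N (fun i t => Complex.exp (ψ i t))) (N : ℝ) :
    SymB n 0 0 N (fun i t => Complex.exp (ψ i t)) := by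
  induction n generalizing N with
  | zero => exact hφ N
  | succ n ih =>
    refine SymB.mk' (hφ N) (fun i t ht => (hψ.2.1 i t ht).hasDerivAt.cexp) ?_
    have h1 := hψ.2.2.mono_a_le (a' := -1) (by linarith)
    have h2 := (ih hψ.of_succ (N - (N0 + 2 * (b - 1 - -1)))).mul h1
    simpa using h2

lemma norm_exp_sub_le {z w : ℂ} (hz : z.re ≤ 0) (hw : w.re ≤ 0) :
    ‖Complex.exp z - Complex.exp w‖ ≤ ‖z - w‖ := by
  have := Convex.norm_image_sub_le_of_norm_hasDerivWithin_le (f := Complex.exp) (f' := Complex.exp)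
    (s := {z : ℂ | z.re ≤ 0}) (C := 1) (x := w) (y := z)
    (fun x _ => (Complex.hasDerivAt_exp x).hasDerivWithinAt)
    (fun x hx => by rw [Complex.norm_exp]; exact Real.exp_le_one_iff.2 hx)
    (convex_halfSpace_re_le 0) hw hz
  simpa using this

lemma SymB.exp_sub {n : ℕ} {b N0 : ℝ} {ψ χ : ι → ℝ → ℂ} (hb : 0 ≤ b) (hψ : SymB n b 0 N0 ψ)
    (hχ : SymB n b 0 N0 χ)
    (hφ : ∀ N, BdW 0 0 N (fun i t => Complex.exp (ψ i t)))
    (hφ' : ∀ N, BdW 0 0 N (fun i t => Complex.exp (χ i t)))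
    (hr : ∀ i, ∀ t : ℝ, 0 < t → (ψ i t).re ≤ 0) (hr' : ∀ i, ∀ t : ℝ, 0 < t → (χ i t).re ≤ 0)
    (N : ℝ) :
    SymB n b 0 N (fun i t => Complex.exp (ψ i t) - Complex.exp (χ i t)) := by
  have hbd : BdW b 0 N (fun i t => Complex.exp (ψ i t) - Complex.exp (χ i t)) := by
    obtain ⟨C, hC⟩ := (hψ.sub hχ).bd
    obtain ⟨C1, hC1⟩ := hφ N
    obtain ⟨C2, hC2⟩ := hφ' N
    refine ⟨|C| * 2 ^ |N0 - N| + |C1| + |C2|, fun i t ht => ?_⟩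
    have hN : 0 < (1 + t) ^ N := by positivity
    have htb : 0 < t ^ b := by positivity
    rcases le_or_gt t 1 with h1 | h1
    · refine (norm_exp_sub_le (hr i t ht) (hr' i t ht)).trans ((hC i t ht).trans ?_)
      have : (1 + t) ^ N0 ≤ 2 ^ |N0 - N| * (1 + t) ^ N := by
        rw [show N0 = (N0 - N) + N by ring, Real.rpow_add (by linarith : (0:ℝ) < 1 + t)]
        gcongr
        rw [show N0 - N + N - N = N0 - N by ring]
        calc (1 + t) ^ (N0 - N) ≤ (1 + t) ^ |N0 - N| := by
              apply Real.rpow_le_rpow_of_exponent_le (by linarith) (le_abs_self _)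
          _ ≤ 2 ^ |N0 - N| := by gcongr; linarith
      simp only [wt, pow_zero, mul_one]
      have h3 : C * (t ^ b * (1 + t) ^ N0) ≤ |C| * (t ^ b * (2 ^ |N0 - N| * (1 + t) ^ N)) := by
        gcongr; exact le_abs_self C
      have : 0 ≤ (|C1| + |C2|) * (t ^ b * (1 + t) ^ N) := by positivity
      linarith
    · refine (norm_sub_le _ _).trans ((add_le_add (hC1 i t ht) (hC2 i t ht)).trans ?_)
      simp only [wt, pow_zero, mul_one, Real.rpow_zero, one_mul]
      have : 1 ≤ t ^ b := Real.one_le_rpow h1.le hb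
      have h3 : C1 * (1 + t) ^ N ≤ |C1| * (t ^ b * (1 + t) ^ N) := by
        gcongr
        · exact le_abs_self _
        · nlinarith
      have h4 : C2 * (1 + t) ^ N ≤ |C2| * (t ^ b * (1 + t) ^ N) := by
        gcongr
        · exact le_abs_self _
        · nlinarith
      have : 0 ≤ |C| * 2 ^ |N0 - N| * (t ^ b * (1 + t) ^ N) := by positivity
      linarith
  cases n with
  | zero => exact hbd
  | succ n =>
    refine SymB.mk' hbd (fun i t ht => (hψ.2.1 i t ht).hasDerivAt.cexp.sub
      (hχ.2.1 i t ht).hasDerivAt.cexp) (SymB.sub ?_ ?_)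
    · simpa using (SymB.exp hb hψ.of_succ hφ (N - N0)).mul hψ.2.2
    · simpa using (SymB.exp hb hχ.of_succ hφ' (N - N0)).mul hχ.2.2

lemma SymB.scale {n : ℕ} {a : ℝ} {k : ℕ} {N N' D : ℝ} {g : ℝ → ℂ}
    (hg : SymB n a k N (fun _ : Unit => g)) (y c : ι → ℝ) (hy : ∀ i, 1 ≤ y i) (hc : ∀ i, 0 ≤ c i)
    (hcy : ∀ i, c i * (1 + Real.log (y i)) ^ k ≤ 1)
    (hD : ∀ i, ∀ w : ℝ, 0 < w → (1 + w / y i) ^ N ≤ D * (1 + w) ^ N') :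
    SymB n a k N' (fun i w => ((c i * (y i) ^ a : ℝ) : ℂ) * g (w / y i)) := by
  have hbd : ∀ (a : ℝ) (g : ℝ → ℂ), BdW a k N (fun _ : Unit => g) →
      BdW a k N' (fun i w => ((c i * (y i) ^ a : ℝ) : ℂ) * g (w / y i)) := by
    rintro a g ⟨C, hC⟩
    refine ⟨|C| * D, fun i w hw => ?_⟩
    have hyi := hy i
    have hy0 : 0 < y i := by linarith
    have hci := hc i
    have hl := Real.log_nonneg hyi
    have h1 := hC () (w / y i) (by positivity)
    have h2 := hD i w hw
    have h3 : (1 + |Real.log (w / y i)|) ^ k ≤ (1 + Real.log (y i)) ^ k * (1 + |Real.log w|) ^ k := by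
      rw [← mul_pow, Real.log_div hw.ne' hy0.ne']
      gcongr
      have := abs_sub (Real.log w) (Real.log (y i))
      rw [abs_of_nonneg hl] at this
      nlinarith [abs_nonneg (Real.log w)]
    rw [norm_mul, Complex.norm_real, Real.norm_of_nonneg (by positivity)]
    have hw' : 0 < w / y i := by positivity
    calc c i * y i ^ a * ‖g (w / y i)‖ ≤ c i * y i ^ a * (C * wt a k N (w / y i)) := by gcongr
      _ ≤ c i * y i ^ a * (|C| * ((w / y i) ^ a * ((1 + Real.log (y i)) ^ k * (1 + |Real.log w|) ^ k) *
            (D * (1 + w) ^ N'))) := by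
          unfold wt
          gcongr
          exact le_abs_self C
      _ = (c i * (1 + Real.log (y i)) ^ k) * (|C| * (w ^ a * (1 + |Real.log w|) ^ k * (D * (1 + w) ^ N'))) := by
          rw [Real.div_rpow hw.le hy0.le]
          have : y i ^ a ≠ 0 := by positivity
          field_simp
      _ ≤ 1 * (|C| * (w ^ a * (1 + |Real.log w|) ^ k * (D * (1 + w) ^ N'))) := by
          have : 0 ≤ D * (1 + w) ^ N' := le_trans (by positivity) h2
          gcongr
          exact hcy i
      _ = _ := by unfold wt; ring
  induction n generalizing a g with
  | zero => exact hbd a g hg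
  | succ n ih =>
    refine SymB.mk' (hbd a g hg.1) (fun i w hw => ?_) (ih hg.2.2)
    have hy0 : 0 < y i := by linarith [hy i]
    have h1 := (hg.2.1 () (w / y i) (by positivity)).hasDerivAt
    have h2 := (HasDerivAt.scomp w h1 ((hasDerivAt_id w).div_const (y i))).const_mul
      ((c i * (y i) ^ a : ℝ) : ℂ)
    refine h2.congr_deriv ?_
    rw [Real.rpow_sub_one hy0.ne']
    simp only [Complex.real_smul]
    push_cast
    field_simp

lemma SymB.expfam (n m : ℕ) (y : ι → ℝ) (hy : ∀ i, 0 < y i) :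
    SymB n (-m) 0 0 (fun i w => (((y i)⁻¹ : ℝ) : ℂ) ^ m * Complex.exp (-((y i)⁻¹ * w : ℝ))) := by
  have hb : ∀ m : ℕ, BdW (-m) 0 0
      (fun i w => (((y i)⁻¹ : ℝ) : ℂ) ^ m * Complex.exp (-((y i)⁻¹ * w : ℝ))) := by
    refine fun m => ⟨m.factorial, fun i t ht => ?_⟩
    have hyi := hy i
    rw [norm_mul, norm_pow, Complex.norm_real, Complex.norm_exp, Real.norm_of_nonneg (by positivity)]
    rw [← Complex.ofReal_neg, Complex.ofReal_re]
    have := Real.pow_div_factorial_le_exp (x := (y i)⁻¹ * t) (by positivity) m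
    rw [div_le_iff₀ (by positivity)] at this
    simp only [wt, pow_zero, mul_one, Real.rpow_zero]
    rw [Real.rpow_neg ht.le, Real.rpow_natCast, Real.exp_neg, ← div_eq_mul_inv, ← div_eq_mul_inv,
      div_le_div_iff₀ (by positivity) (by positivity), ← mul_pow]
    linarith
  induction n generalizing m with
  | zero => exact hb m
  | succ n ih =>
    have := (ih (m+1)).neg
    rw [show (-((m+1:ℕ):ℝ)) = -(m:ℝ) - 1 by push_cast; ring] at this
    refine SymB.mk' (hb m) (fun i w hw => ?_) this
    have h1 : HasDerivAt (fun w : ℝ => (((-((y i)⁻¹ * w)) : ℝ) : ℂ)) ((-((y i)⁻¹ * 1) : ℝ) : ℂ) w :=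
      ((hasDerivAt_id w).const_mul (y i)⁻¹).neg.ofReal_comp
    have h2 := h1.cexp.const_mul ((((y i)⁻¹ : ℝ) : ℂ) ^ m)
    simp only [Complex.ofReal_neg] at h2
    refine h2.congr_deriv ?_
    push_cast; ring

lemma exp_neg_bdW (N : ℝ) {c p : ℝ} (hc : 0 < c) (hp : 0 < p) :
    ∃ C : ℝ, 0 ≤ C ∧ ∀ t : ℝ, 0 < t → Real.exp (-(c * t ^ p)) ≤ C * (1 + t) ^ N := by
  obtain ⟨m, hm⟩ := exists_nat_gt (|N| / p)
  have hm' : |N| ≤ p * m := by rw [div_lt_iff₀ hp] at hm; linarith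
  refine ⟨2 ^ |N| * (1 + m.factorial / c ^ m), by positivity, fun t ht => ?_⟩
  have h0 : (1 + t) ^ (-N) ≤ 2 ^ |N| * (1 + t ^ (p * m)) := by
    rcases le_or_gt t 1 with h1 | h1
    · calc (1 + t) ^ (-N) ≤ (1 + t) ^ |N| :=
            Real.rpow_le_rpow_of_exponent_le (by linarith) (neg_le_abs _)
        _ ≤ 2 ^ |N| := by gcongr; linarith
        _ ≤ _ := by
          have : 0 ≤ (2:ℝ) ^ |N| * t ^ (p * m) := by positivity
          linarith
    · calc (1 + t) ^ (-N) ≤ (1 + t) ^ |N| :=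
            Real.rpow_le_rpow_of_exponent_le (by linarith) (neg_le_abs _)
        _ ≤ (2 * t) ^ |N| := by gcongr; linarith
        _ = 2 ^ |N| * t ^ |N| := Real.mul_rpow (by norm_num) ht.le
        _ ≤ 2 ^ |N| * (1 + t ^ (p * m)) := by
          gcongr
          have := Real.rpow_le_rpow_of_exponent_le h1.le hm'
          linarith
  have h2 : Real.exp (-(c * t ^ p)) * t ^ (p * m) ≤ m.factorial / c ^ m := by
    have := Real.pow_div_factorial_le_exp (x := c * t ^ p) (by positivity) m
    rw [div_le_iff₀ (by positivity), mul_pow, ← Real.rpow_mul_natCast ht.le] at this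
    rw [Real.exp_neg, le_div_iff₀ (by positivity), inv_mul_eq_div, div_mul_eq_mul_div,
      div_le_iff₀ (by positivity)]
    linarith
  have h3 : Real.exp (-(c * t ^ p)) ≤ 1 := Real.exp_le_one_iff.2 (by simp; positivity)
  have h4 : Real.exp (-(c * t ^ p)) * (1 + t) ^ (-N) ≤ 2 ^ |N| * (1 + m.factorial / c ^ m) := by
    calc _ ≤ Real.exp (-(c * t ^ p)) * (2 ^ |N| * (1 + t ^ (p * m))) := by gcongr
      _ = 2 ^ |N| * (Real.exp (-(c * t ^ p)) + Real.exp (-(c * t ^ p)) * t ^ (p * m)) := by ring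
      _ ≤ _ := by gcongr
  rw [Real.rpow_neg (by linarith), ← div_eq_mul_inv, div_le_iff₀ (by positivity)] at h4
  exact h4

end SymExp

noncomputable section Tail

variable {ι : Type*}

lemma norm_osc (s w : ℝ) : ‖Complex.exp (-Complex.I * w * s)‖ = 1 := by
  rw [Complex.norm_exp]; simp

lemma ibp_one {h : ℝ → ℂ} {s : ℝ} (hs : |s| = 1) (hd : ∀ t : ℝ, 0 < t → DifferentiableAt ℝ h t)
    (hi : IntegrableOn h (Set.Ioi 1)) (hi' : IntegrableOn (deriv h) (Set.Ioi 1)) :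
    ‖∫ w in Set.Ioi (1:ℝ), Complex.exp (-Complex.I * w * s) * h w‖ ≤
      ‖h 1‖ + ‖∫ w in Set.Ioi (1:ℝ), Complex.exp (-Complex.I * w * s) * deriv h w‖ := by
  have hm : ∀ g : ℝ → ℂ, IntegrableOn g (Set.Ioi 1) → IntegrableOn
      (fun w : ℝ => Complex.exp (-Complex.I * w * s) * g w) (Set.Ioi 1) := by
    intro g hg
    refine Integrable.bdd_mul (c := 1) hg ?_ ?_
    · exact (by fun_prop : Continuous fun w : ℝ => Complex.exp (-Complex.I * w * s)).aestronglyMeasurable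
    · exact Eventually.of_forall fun w => (norm_osc s w).le
  have hF : ∀ w ∈ Set.Ici (1:ℝ), HasDerivAt (fun w : ℝ => Complex.exp (-Complex.I * w * s) * h w)
      ((-Complex.I * s) * (Complex.exp (-Complex.I * w * s) * h w) +
        Complex.exp (-Complex.I * w * s) * deriv h w) w := by
    intro w hw
    have h1 : HasDerivAt (fun w : ℝ => -Complex.I * (w:ℂ) * s) (-Complex.I * 1 * s) w :=
      ((Complex.ofRealCLM.hasDerivAt (x := w)).const_mul (-Complex.I)).mul_const _
    refine (h1.cexp.mul (hd w (by simp at hw; linarith)).hasDerivAt).congr_deriv ?_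
    ring
  have hI : IntegrableOn (fun w : ℝ => (-Complex.I * s) * (Complex.exp (-Complex.I * w * s) * h w) +
        Complex.exp (-Complex.I * w * s) * deriv h w) (Set.Ioi 1) :=
    ((hm h hi).const_mul _).add (hm _ hi')
  have hT := tendsto_zero_of_hasDerivAt_of_integrableOn_Ioi
    (fun w hw => hF w (Set.Ioi_subset_Ici_self hw)) hI (hm h hi)
  have key := integral_Ioi_of_hasDerivAt_of_tendsto
    (hF 1 Set.self_mem_Ici).continuousAt.continuousWithinAt
    (fun w hw => hF w (Set.Ioi_subset_Ici_self hw)) hI hT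
  rw [integral_add ((hm h hi).const_mul _) (hm _ hi'), integral_const_mul] at key
  have e : ‖(-Complex.I * s) * ∫ w in Set.Ioi (1:ℝ), Complex.exp (-Complex.I * w * s) * h w‖ =
      ‖∫ w in Set.Ioi (1:ℝ), Complex.exp (-Complex.I * w * s) * h w‖ := by
    rw [norm_mul]; simp [hs]
  rw [← e, eq_sub_of_add_eq key]
  refine (norm_sub_le _ _).trans ?_
  rw [zero_sub, norm_neg, norm_mul, norm_osc, one_mul]

/-- integrability on `(1,∞)` for members of decaying symbol classes -/
lemma wt_le_inv_sq {a : ℝ} (ha : a ≤ 2) (k : ℕ) {M : ℝ} (hM : M ≤ -(k + 4)) {t : ℝ} (ht : 1 ≤ t) :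
    wt a k M t ≤ t ^ (-2 : ℝ) := by
  have h0 : 0 < t := by linarith
  have h1 : t ^ a ≤ (1 + t) ^ (2:ℝ) := by
    calc t ^ a ≤ t ^ (2:ℝ) := Real.rpow_le_rpow_of_exponent_le ht ha
      _ ≤ _ := by gcongr; linarith
  have h2 : (1 + |Real.log t|) ^ k ≤ (1 + t) ^ (k:ℝ) := by
    rw [Real.rpow_natCast, abs_of_nonneg (Real.log_nonneg ht)]
    have := Real.log_nonneg ht
    gcongr
    linarith [Real.log_le_sub_one_of_pos h0]
  have h3 : (1 + t) ^ M ≤ (1 + t) ^ (-(k + 4) : ℝ) :=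
    Real.rpow_le_rpow_of_exponent_le (by linarith) hM
  calc wt a k M t ≤ (1 + t) ^ (2:ℝ) * (1 + t) ^ (k:ℝ) * (1 + t) ^ (-(k + 4) : ℝ) := by
        unfold wt; gcongr
    _ = (1 + t) ^ (-2 : ℝ) := by
        rw [← Real.rpow_add (by linarith), ← Real.rpow_add (by linarith)]; congr 1; ring
    _ ≤ t ^ (-2:ℝ) := by
        apply Real.rpow_le_rpow_of_nonpos h0 (by linarith) (by norm_num)

lemma SymB.integrableOn_Ioi_one {n : ℕ} {a : ℝ} (ha : a ≤ 2) {k : ℕ} {M : ℝ} (hM : M ≤ -(k + 4))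
    {h : ℝ → ℂ} (hh : SymB n a k M (fun _ : Unit => h))
    (hmeas : AEStronglyMeasurable h (volume.restrict (Set.Ioi 1))) :
    IntegrableOn h (Set.Ioi 1) := by
  obtain ⟨C, hC⟩ := hh.bd
  refine Integrable.mono' ((integrableOn_Ioi_rpow_of_lt (by norm_num : (-2:ℝ) < -1) one_pos).const_mul |C|)
    hmeas ?_
  refine (ae_restrict_mem measurableSet_Ioi).mono fun t ht => ?_
  have ht' : (1:ℝ) < t := ht
  refine (hC () t (by linarith)).trans ?_
  have := wt_le_inv_sq ha k hM ht'.le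
  have h2 := wt_pos a k M (by linarith : 0 < t)
  calc C * wt a k M t ≤ |C| * wt a k M t := by gcongr; exact le_abs_self C
    _ ≤ _ := by gcongr

lemma SymB.aesm {n : ℕ} {a : ℝ} {k : ℕ} {M : ℝ} {h : ℝ → ℂ} (hh : SymB (n+1) a k M (fun _ : Unit => h)) :
    AEStronglyMeasurable h (volume.restrict (Set.Ioi 0)) :=
  ContinuousOn.aestronglyMeasurable
    (fun t ht => (hh.2.1 () t ht).continuousAt.continuousWithinAt) measurableSet_Ioi

lemma tail_zero {a : ℝ} (ha0 : 0 < a) (ha2 : a < 2) {k : ℕ} {h : ι → ℝ → ℂ} (hh : SymB 3 a k 0 h)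
    (hm : ∀ i, ∃ M : ℝ, M ≤ -(k + 4) ∧ SymB 3 a k M (fun _ : Unit => h i)) :
    ∃ C : ℝ, ∀ i, ∀ s : ℝ, |s| = 1 →
      IntegrableOn (h i) (Set.Ioi 0) ∧
      ‖∫ w in Set.Ioi (0:ℝ), Complex.exp (-Complex.I * w * s) * h i w‖ ≤ C := by
  obtain ⟨C0, hC0⟩ := hh.1
  obtain ⟨C1, hC1⟩ := hh.2.2.1
  obtain ⟨C2, hC2⟩ := hh.2.2.2.2.1
  obtain ⟨C3, hC3⟩ := hh.2.2.2.2.2.2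
  obtain ⟨D, hD⟩ := wt_mono_a ha0 k 0
  obtain ⟨D', hD'0, hD'⟩ := one_add_log_pow_le k (δ := (2 - a) / 2) (by linarith)
  set B := |C0| * (|D| * 2 ^ (2 * a)) with hB
  set J := ∫ w in Set.Ioi (1:ℝ), |C3| * (D' * w ^ (a / 2 - 2)) with hJ
  have hJi : IntegrableOn (fun w : ℝ => |C3| * (D' * w ^ (a / 2 - 2))) (Set.Ioi 1) :=
    ((integrableOn_Ioi_rpow_of_lt (by linarith : a / 2 - 2 < -1) one_pos).const_mul _).const_mul _
  refine ⟨B + (C0 + (C1 + (C2 + J))), fun i s hs => ?_⟩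
  obtain ⟨M, hM, hS⟩ := hm i
  have hw1 : ∀ a : ℝ, wt a k 0 1 = 1 := fun a => by simp [wt]
  have hb0 : ∀ w ∈ Set.Ioc (0:ℝ) 1, ‖h i w‖ ≤ B := by
    intro w hw
    have h1 := hC0 i w hw.1
    have h2 := hD w hw.1
    have h3 := wt_pos a k 0 hw.1
    refine h1.trans ?_
    calc C0 * wt a k 0 w ≤ |C0| * wt a k 0 w := by gcongr; exact le_abs_self _
      _ ≤ |C0| * (D * wt 0 0 (0 + 2 * (a - 0)) w) := by gcongr
      _ ≤ |C0| * (|D| * 2 ^ (2 * a)) := by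
        simp only [wt, pow_zero, mul_one, Real.rpow_zero, one_mul, zero_add, sub_zero]
        have := hw.1
        gcongr
        · exact le_abs_self _
        · linarith [hw.2]
  have hsub : Set.Ioi (1:ℝ) ⊆ Set.Ioi 0 := Set.Ioi_subset_Ioi zero_le_one
  have hi0 : IntegrableOn (h i) (Set.Ioi 1) :=
    hS.integrableOn_Ioi_one ha2.le hM (hS.aesm.mono_set hsub)
  have hi1 : IntegrableOn (deriv (h i)) (Set.Ioi 1) :=
    hS.2.2.integrableOn_Ioi_one (by linarith) hM (aestronglyMeasurable_deriv _ _)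
  have hi2 : IntegrableOn (deriv (deriv (h i))) (Set.Ioi 1) :=
    hS.2.2.2.2.integrableOn_Ioi_one (by linarith) hM (aestronglyMeasurable_deriv _ _)
  have hi3 : IntegrableOn (deriv (deriv (deriv (h i)))) (Set.Ioi 1) :=
    SymB.integrableOn_Ioi_one (n := 0) (by linarith) hM hS.2.2.2.2.2.2 (aestronglyMeasurable_deriv _ _)
  have hic : IntegrableOn (h i) (Set.Ioc 0 1) := by
    refine Integrable.mono' (g := fun _ => B) (integrable_const B)
      (hS.aesm.mono_set Set.Ioc_subset_Ioi_self) ?_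
    exact (ae_restrict_mem measurableSet_Ioc).mono fun t ht => hb0 t ht
  have hii : IntegrableOn (h i) (Set.Ioi 0) := by
    rw [← Set.Ioc_union_Ioi_eq_Ioi zero_le_one]; exact hic.union hi0
  refine ⟨hii, ?_⟩
  have hmul : ∀ (S : Set ℝ) (g : ℝ → ℂ), IntegrableOn g S → IntegrableOn
      (fun w : ℝ => Complex.exp (-Complex.I * w * s) * g w) S := by
    intro S g hg
    refine Integrable.bdd_mul (c := 1) hg ?_ ?_
    · exact (by fun_prop : Continuous fun w : ℝ => Complex.exp (-Complex.I * w * s)).aestronglyMeasurable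
    · exact Eventually.of_forall fun w => (norm_osc s w).le
  rw [← Set.Ioc_union_Ioi_eq_Ioi (zero_le_one (α := ℝ)), setIntegral_union (Set.Ioc_disjoint_Ioi le_rfl)
    measurableSet_Ioi (hmul _ _ hic) (hmul _ _ hi0)]
  refine (norm_add_le _ _).trans (add_le_add ?_ ?_)
  · have := norm_setIntegral_le_of_norm_le_const (μ := volume) (s := Set.Ioc (0:ℝ) 1) (C := B)
      (f := fun w : ℝ => Complex.exp (-Complex.I * w * s) * h i w) (by simp)
      (fun w hw => by rw [norm_mul, norm_osc, one_mul]; exact hb0 w hw)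
    simpa using this
  · refine (ibp_one hs (hS.2.1 ()) hi0 hi1).trans (add_le_add ?_ ?_)
    · simpa [hw1] using hC0 i 1 one_pos
    refine (ibp_one hs (hS.2.2.2.1 ()) hi1 hi2).trans (add_le_add ?_ ?_)
    · simpa [hw1] using hC1 i 1 one_pos
    refine (ibp_one hs (hS.2.2.2.2.2.1 ()) hi2 hi3).trans (add_le_add ?_ ?_)
    · simpa [hw1] using hC2 i 1 one_pos
    refine norm_integral_le_of_norm_le hJi ?_
    refine (ae_restrict_mem measurableSet_Ioi).mono fun t ht => ?_
    have ht' : (1:ℝ) < t := ht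
    have ht0 : 0 < t := by linarith
    rw [norm_mul, norm_osc, one_mul]
    refine (hC3 i t ht0).trans ?_
    have h3 := wt_pos (a - 1 - 1 - 1) k 0 ht0
    calc C3 * wt (a - 1 - 1 - 1) k 0 t ≤ |C3| * wt (a - 1 - 1 - 1) k 0 t := by
          gcongr; exact le_abs_self _
      _ ≤ |C3| * (t ^ (a - 1 - 1 - 1) * (D' * t ^ ((2 - a) / 2)) * 1) := by
          unfold wt
          rw [Real.rpow_zero]
          gcongr
          exact hD' t ht'.le
      _ = _ := by
          rw [show a / 2 - 2 = (a - 1 - 1 - 1) + (2 - a) / 2 by ring, Real.rpow_add ht0]; ring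

/-- change of variables `t = w / y` with `x = s y`. -/
lemma osc_scale (g : ℝ → ℂ) {y s : ℝ} (hy : 0 < y) :
    ∫ t in Set.Ioi (0:ℝ), Complex.exp (-Complex.I * t * (s * y : ℝ)) * g t =
      (y⁻¹ : ℝ) * ∫ w in Set.Ioi (0:ℝ), Complex.exp (-Complex.I * w * s) * g (w / y) := by
  have := integral_comp_mul_left_Ioi 
    (fun t : ℝ => Complex.exp (-Complex.I * t * (s * y : ℝ)) * g t) 0 (inv_pos.2 hy)
  rw [mul_zero, inv_inv] at this
  have h2 : ∫ t in Set.Ioi (0:ℝ), Complex.exp (-Complex.I * t * (s * y : ℝ)) * g t =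
    (y⁻¹ : ℝ) • (y • ∫ t in Set.Ioi (0:ℝ), Complex.exp (-Complex.I * t * (s * y : ℝ)) * g t) := by
    rw [smul_smul, inv_mul_cancel₀ hy.ne', one_smul]
  rw [h2, ← this, Complex.real_smul]
  congr 2
  ext w
  congr 2
  · push_cast
    have : (y:ℂ) ≠ 0 := by exact_mod_cast hy.ne'
    field_simp
  · rw [inv_mul_eq_div]

lemma exists_sign (x : ℝ) (hx : x ≠ 0) : ∃ s : ℝ, |s| = 1 ∧ x = s * |x| := by
  rcases lt_or_gt_of_ne hx with h | h
  · exact ⟨-1, by simp, by rw [abs_of_neg h]; ring⟩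
  · exact ⟨1, by simp, by rw [abs_of_pos h]; ring⟩

/-- Main tail lemma. -/
lemma tail_sym {a : ℝ} (ha0 : 0 < a) (ha2 : a < 2) {k : ℕ} {g : ℝ → ℂ}
    (hg : ∀ N, SymB 3 a k N (fun _ : Unit => g)) :
    ∃ C : ℝ, 0 ≤ C ∧ ∀ x : ℝ, 1 ≤ |x| →
      ‖∫ t in Set.Ioi (0:ℝ), Complex.exp (-Complex.I * t * x) * g t‖ ≤
        C * (|x| ^ (-(1 + a)) * (1 + Real.log |x|) ^ k) := by
  let ι := {y : ℝ // 1 ≤ y}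
  let c : ι → ℝ := fun y => ((1 + Real.log y.1) ^ k)⁻¹
  have hlp : ∀ y : ι, 0 < (1 + Real.log y.1) ^ k := fun y => by
    have := Real.log_nonneg y.2
    positivity
  have hc0 : ∀ y : ι, 0 ≤ c y := fun y => (inv_pos.2 (hlp y)).le
  have hc1 : ∀ y : ι, c y * (1 + Real.log y.1) ^ k ≤ 1 := fun y => (inv_mul_cancel₀ (hlp y).ne').le
  have h1 : SymB 3 a k 0 (fun (i : ι) w => ((c i * (i.1) ^ a : ℝ) : ℂ) * g (w / i.1)) :=
    (hg 0).scale (D := 1) (fun i : ι => i.1) c (fun i => i.2) hc0 hc1 (fun i w hw => by simp)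
  have h2 : ∀ i : ι, ∃ M : ℝ, M ≤ -(k + 4) ∧
      SymB 3 a k M (fun _ : Unit => fun w => ((c i * (i.1) ^ a : ℝ) : ℂ) * g (w / i.1)) := by
    intro i
    refine ⟨-(k+4), le_refl _, (hg (-(k+4))).scale (D := i.1 ^ ((k:ℝ)+4)) (fun _ : Unit => i.1) (fun _ => c i) (fun _ => i.2)
      (fun _ => hc0 i) (fun _ => hc1 i) (fun _ w hw => ?_)⟩
    have hi := i.2
    have hi0 : 0 < i.1 := by linarith
    have : (1 + w) / i.1 ≤ 1 + w / i.1 := by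
      rw [add_div]; gcongr; rw [div_le_one hi0]; exact hi
    calc (1 + w / i.1) ^ (-((k:ℝ)+4)) ≤ ((1 + w) / i.1) ^ (-((k:ℝ)+4)) :=
          Real.rpow_le_rpow_of_nonpos (by positivity) this (by linarith [(Nat.cast_nonneg k : (0:ℝ) ≤ k)])
      _ = _ := by
        rw [Real.div_rpow (by linarith) hi0.le, Real.rpow_neg hi0.le, div_inv_eq_mul, mul_comm]
  obtain ⟨C, hC⟩ := tail_zero ha0 ha2 h1 h2
  refine ⟨|C|, abs_nonneg C, fun x hx => ?_⟩
  have hx0 : x ≠ 0 := by rintro rfl; simp at hx; linarith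
  obtain ⟨s, hs, hxs⟩ := exists_sign x hx0
  set y : ι := ⟨|x|, hx⟩ with hy
  have hy0 : 0 < |x| := by positivity
  have h3 := (hC y s hs).2
  rw [show (fun t : ℝ => Complex.exp (-Complex.I * t * x) * g t) =
    fun t : ℝ => Complex.exp (-Complex.I * t * (s * |x| : ℝ)) * g t by rw [← hxs], osc_scale _ hy0]
  have h4 : ∫ w in Set.Ioi (0:ℝ), Complex.exp (-Complex.I * w * s) *
      (((c y * (y.1) ^ a : ℝ) : ℂ) * g (w / y.1)) = ((c y * (y.1) ^ a : ℝ) : ℂ) *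
      ∫ w in Set.Ioi (0:ℝ), Complex.exp (-Complex.I * w * s) * g (w / |x|) := by
    rw [← integral_const_mul]; congr 1; ext w; ring
  have hcy : 0 < c y * |x| ^ a := by
    have := hlp y
    simp only [c]; positivity
  rw [h4, norm_mul, Complex.norm_real, Real.norm_of_nonneg hcy.le] at h3
  rw [norm_mul, Complex.norm_real, Real.norm_of_nonneg (by positivity)]
  set Q := ‖∫ w in Set.Ioi (0:ℝ), Complex.exp (-Complex.I * w * s) * g (w / |x|)‖ with hQ
  have h5 : Q ≤ |C| * (|x| ^ (-a) * (1 + Real.log |x|) ^ k) := by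
    have : Q ≤ |C| / (c y * |x| ^ a) := by
      rw [le_div_iff₀ hcy]
      calc Q * (c y * |x| ^ a) = c y * y.1 ^ a * Q := by simp only [hy]; ring
        _ ≤ C := h3
        _ ≤ _ := le_abs_self _
    refine this.trans (le_of_eq ?_)
    simp only [c, hy, Real.rpow_neg hy0.le]
    field_simp
  rw [show -(1 + a) = -1 + -a by ring, Real.rpow_add hy0, Real.rpow_neg_one]
  calc |x|⁻¹ * Q ≤ |x|⁻¹ * (|C| * (|x| ^ (-a) * (1 + Real.log |x|) ^ k)) := by gcongr
    _ = _ := by ring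

end Tail

noncomputable section Special

lemma expneg_bd {c : ℝ} (hc : 0 < c) (N : ℝ) :
    BdW 0 0 N (fun (_ : Unit) (t : ℝ) => Complex.exp (-((c * t : ℝ) : ℂ))) := by
  obtain ⟨C, _, hC⟩ := exp_neg_bdW N hc one_pos
  refine ⟨C, fun i t ht => ?_⟩
  beta_reduce
  rw [← Complex.ofReal_neg, Complex.norm_exp, Complex.ofReal_re]
  simpa [wt] using hC t ht

lemma expneg_lin (n : ℕ) (c : ℝ) :
    SymB n 1 0 0 (fun (_ : Unit) (t : ℝ) => -((c * t : ℝ) : ℂ)) := by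
  refine ((SymB.id n).const_mul (-(c:ℂ))).congr fun i t ht => ?_
  push_cast; ring

lemma expneg_sym (n : ℕ) {c : ℝ} (hc : 0 < c) (N : ℝ) :
    SymB n 0 0 N (fun (_ : Unit) (t : ℝ) => Complex.exp (-((c * t : ℝ) : ℂ))) :=
  SymB.exp zero_le_one (expneg_lin n c) (expneg_bd hc) N

lemma tail_logfam (j : ℕ) : ∃ C : ℝ, 0 ≤ C ∧ ∀ x : ℝ, 1 ≤ |x| →
    IntegrableOn (fun t : ℝ => (t : ℂ) * ((Real.log (t * |x|) : ℝ) : ℂ) ^ j * Complex.exp (-(t:ℂ)))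
      (Set.Ioi 0) ∧
    ‖∫ t in Set.Ioi (0:ℝ), Complex.exp (-Complex.I * t * x) *
      ((t : ℂ) * ((Real.log (t * |x|) : ℝ) : ℂ) ^ j * Complex.exp (-(t:ℂ)))‖ ≤ C * |x| ^ (-2 : ℝ) := by
  let ι := {y : ℝ // 1 ≤ y}
  have hy : ∀ i : ι, 0 < i.1 := fun i => by linarith [i.2]
  let h : ι → ℝ → ℂ := fun i w => (w:ℂ) * ((Real.log w : ℝ) : ℂ) ^ j *
    Complex.exp (-((i.1)⁻¹ * w : ℝ))
  have h1 : SymB 3 1 j 0 h := by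
    have := ((SymB.id (ι := ι) 3).mul (SymB.logpow 3 j)).mul (SymB.expfam 3 0 (fun i : ι => i.1) hy)
    simpa [h] using this
  have h2 : ∀ i : ι, ∃ M : ℝ, M ≤ -(j + 4) ∧ SymB 3 1 j M (fun _ : Unit => h i) := by
    intro i
    refine ⟨-(j+4), le_refl _, ?_⟩
    have := ((SymB.id (ι := Unit) 3).mul (SymB.logpow 3 j)).mul
      (expneg_sym 3 (inv_pos.2 (hy i)) (-(j+4)))
    simpa [h] using this
  obtain ⟨C, hC⟩ := tail_zero one_pos one_lt_two h1 h2
  refine ⟨|C|, abs_nonneg C, fun x hx => ?_⟩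
  have hx0 : x ≠ 0 := by rintro rfl; simp at hx; linarith
  obtain ⟨s, hs, hxs⟩ := exists_sign x hx0
  have hy0 : 0 < |x| := by positivity
  obtain ⟨h3, h4⟩ := hC ⟨|x|, hx⟩ s hs
  have he : ∀ w : ℝ, ((w / |x| : ℝ) : ℂ) * ((Real.log (w / |x| * |x|) : ℝ) : ℂ) ^ j *
      Complex.exp (-((w / |x| : ℝ):ℂ)) = ((|x|⁻¹ : ℝ) : ℂ) * h ⟨|x|, hx⟩ w := by
    intro w
    simp only [h]
    rw [div_mul_cancel₀ _ hy0.ne', div_eq_inv_mul]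
    push_cast; ring
  constructor
  · have h5 := (integrableOn_Ioi_comp_mul_left_iff (h ⟨|x|, hx⟩) 0 hy0).2 (by simpa using h3)
    have h6 := Integrable.const_mul h5 ((|x|⁻¹ : ℝ) : ℂ)
    refine h6.congr (Eventually.of_forall fun t => ?_)
    show ((|x|⁻¹ : ℝ) : ℂ) * h ⟨|x|, hx⟩ (|x| * t) = _
    rw [← he]
    rw [mul_div_cancel_left₀ _ hy0.ne']
  · have e1 : (fun t : ℝ => Complex.exp (-Complex.I * t * x) *
      ((t : ℂ) * ((Real.log (t * |x|) : ℝ) : ℂ) ^ j * Complex.exp (-(t:ℂ)))) = 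
      (fun t : ℝ => Complex.exp (-Complex.I * t * (s * |x| : ℝ)) *
      ((t : ℂ) * ((Real.log (t * |x|) : ℝ) : ℂ) ^ j * Complex.exp (-(t:ℂ)))) := by rw [← hxs]
    rw [e1, osc_scale (fun t : ℝ => (t : ℂ) * ((Real.log (t * |x|) : ℝ) : ℂ) ^ j * Complex.exp (-(t:ℂ))) hy0]
    simp only [he]
    have e2 : ∫ w in Set.Ioi (0:ℝ), Complex.exp (-Complex.I * w * s) * (((|x|⁻¹ : ℝ) : ℂ) * h ⟨|x|, hx⟩ w)
       = ((|x|⁻¹ : ℝ) : ℂ) * ∫ w in Set.Ioi (0:ℝ), Complex.exp (-Complex.I * w * s) * h ⟨|x|, hx⟩ w := by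
      rw [← integral_const_mul]; congr 1; ext w; ring
    rw [e2, norm_mul, norm_mul, Complex.norm_real, Real.norm_of_nonneg (by positivity)]
    rw [show (-2:ℝ) = -1 + -1 by norm_num, Real.rpow_add hy0, Real.rpow_neg_one]
    calc _ ≤ |x|⁻¹ * (|x|⁻¹ * |C|) := by gcongr; exact h4.trans (le_abs_self C)
      _ = _ := by ring

lemma special_zero (x : ℝ) (hx : 1 ≤ |x|) :
    |(Complex.I * ∫ t in Set.Ioi (0:ℝ), Complex.exp (-Complex.I * t * x) *
      ((t : ℂ) * Complex.exp (-(t:ℂ)))).re| ≤ 2 * |x| ^ (-3 : ℝ) := by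
  set z : ℂ := 1 + Complex.I * x with hz
  have hzre : z.re = 1 := by simp [hz]
  have hz0 : z ≠ 0 := by intro h; rw [h] at hzre; simp at hzre
  have hz1 : 1 ≤ ‖z‖ := by
    have := Complex.abs_re_le_norm z; rw [hzre] at this; simpa using this
  have e : ∫ t in Set.Ioi (0:ℝ), Complex.exp (-Complex.I * t * x) * ((t : ℂ) * Complex.exp (-(t:ℂ)))
      = (1 / (1 + Complex.I * x)) ^ 2 := by
    have hF : ∀ t : ℝ, HasDerivAt (fun t : ℝ => -((t:ℂ) / z + 1 / z ^ 2) * Complex.exp (-z * t))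
        (Complex.exp (-Complex.I * t * x) * ((t : ℂ) * Complex.exp (-(t:ℂ)))) t := by
      intro t
      have h1 : HasDerivAt (fun t : ℝ => (t:ℂ)) 1 t := Complex.ofRealCLM.hasDerivAt (x := t)
      refine (((h1.div_const z).add_const (1 / z^2)).neg.mul (h1.const_mul (-z)).cexp).congr_deriv ?_
      rw [show Complex.exp (-Complex.I * t * x) * ((t : ℂ) * Complex.exp (-(t:ℂ))) =
        t * Complex.exp (-z * t) by
          rw [mul_left_comm, ← Complex.exp_add]; congr 2; rw [hz]; ring]
      simp only [Pi.neg_apply]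
      field_simp
      ring
    have hI : IntegrableOn (fun t : ℝ => Complex.exp (-Complex.I * t * x) *
        ((t : ℂ) * Complex.exp (-(t:ℂ)))) (Set.Ioi 0) := by
      obtain ⟨C, _, hC⟩ := tail_logfam 0
      have hg := (hC x hx).1
      simp only [pow_zero, mul_one] at hg
      refine Integrable.bdd_mul (c := 1) hg ?_ ?_
      · exact (by fun_prop : Continuous fun w : ℝ => Complex.exp (-Complex.I * w * x)).aestronglyMeasurable
      · exact Eventually.of_forall fun w => (norm_osc x w).le
    have hT : Tendsto (fun t : ℝ => -((t:ℂ) / z + 1 / z ^ 2) * Complex.exp (-z * t)) atTop (nhds 0) := by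
      have h1 := (Real.tendsto_pow_mul_exp_neg_atTop_nhds_zero 1).add
        (Real.tendsto_pow_mul_exp_neg_atTop_nhds_zero 0)
      rw [add_zero] at h1
      refine squeeze_zero_norm' ?_ h1
      filter_upwards [eventually_gt_atTop 0] with t ht
      rw [norm_mul, norm_neg, Complex.norm_exp, ← add_mul]
      have : (-z * (t:ℂ)).re = -t := by simp [hzre]
      rw [this]
      gcongr
      refine (norm_add_le _ _).trans (add_le_add ?_ ?_)
      · rw [norm_div, Complex.norm_real, Real.norm_of_nonneg ht.le, pow_one]
        exact div_le_self ht.le hz1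
      · rw [norm_div, norm_one, norm_pow, pow_zero]
        exact div_le_self zero_le_one (one_le_pow₀ hz1)
    have := integral_Ioi_of_hasDerivAt_of_tendsto (hF 0).continuousAt.continuousWithinAt
      (fun t _ => hF t) hI hT
    rw [this]
    simp [hz]
  have h0 : (0:ℝ) < 1 + x ^ 2 := by positivity
  have e3 : (Complex.I * (1 / (1 + Complex.I * x)) ^ 2).re = 2 * x / (1 + x^2)^2 := by
    have : (1 / (1 + Complex.I * (x:ℂ))) = (1 - Complex.I * x) * ((1 / (1 + x^2) : ℝ) : ℂ) := by
      have h1 : (1 + Complex.I * (x:ℂ)) ≠ 0 := by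
        intro h; have := congrArg Complex.re h; simp at this
      have h2 : (1 + (x:ℂ)^2) ≠ 0 := by exact_mod_cast h0.ne'
      push_cast
      rw [mul_one_div, div_eq_div_iff h1 h2]
      linear_combination (x:ℂ)^2 * Complex.I_sq
    rw [this, mul_pow, ← Complex.ofReal_pow, ← mul_assoc, Complex.re_mul_ofReal]
    have : (Complex.I * (1 - Complex.I * (x:ℂ)) ^ 2).re = 2 * x := by
      simp [pow_two]; ring
    rw [this]; field_simp
  rw [e, e3, abs_div, abs_mul, abs_two, abs_of_pos (by positivity : 0 < (1 + x^2)^2)]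
  have hy : 0 < |x| := by linarith
  rw [Real.rpow_neg hy.le, show (3:ℝ) = ((3:ℕ):ℝ) by norm_num, Real.rpow_natCast, ← div_eq_mul_inv,
    div_le_div_iff₀ (by positivity) (by positivity), ← sq_abs x]
  have : |x| * |x|^3 ≤ (1 + |x|^2)^2 := by nlinarith [sq_nonneg |x|]
  nlinarith

lemma special_log (m : ℕ) : ∃ C : ℝ, 0 ≤ C ∧ ∀ x : ℝ, 1 ≤ |x| →
    |(Complex.I * ∫ t in Set.Ioi (0:ℝ), Complex.exp (-Complex.I * t * x) *
      ((t : ℂ) * ((Real.log t : ℝ) : ℂ) ^ (m+1) * Complex.exp (-(t:ℂ)))).re| ≤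
      C * (|x| ^ (-2 : ℝ) * (1 + Real.log |x|) ^ m) := by
  choose C hC0 hC using tail_logfam
  refine ⟨2 + ∑ j ∈ Finset.range (m+1), C (j+1) * ((m+1).choose (j+1)), ?_, fun x hx => ?_⟩
  · have : 0 ≤ ∑ j ∈ Finset.range (m+1), C (j+1) * ((m+1).choose (j+1)) :=
      Finset.sum_nonneg fun j _ => mul_nonneg (hC0 _) (by positivity)
    linarith
  have hy0 : 0 < |x| := by linarith
  have hl := Real.log_nonneg hx
  set l := Real.log |x| with hldef
  let A : ℕ → ℂ := fun j => ∫ t in Set.Ioi (0:ℝ), Complex.exp (-Complex.I * t * x) *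
      ((t : ℂ) * ((Real.log (t * |x|) : ℝ) : ℂ) ^ j * Complex.exp (-(t:ℂ)))
  have hmul : ∀ (S : Set ℝ) (g : ℝ → ℂ), IntegrableOn g S → IntegrableOn
      (fun w : ℝ => Complex.exp (-Complex.I * w * x) * g w) S := by
    intro S g hg
    refine Integrable.bdd_mul (c := 1) hg ?_ ?_
    · exact (by fun_prop : Continuous fun w : ℝ => Complex.exp (-Complex.I * w * x)).aestronglyMeasurable
    · exact Eventually.of_forall fun w => (norm_osc x w).le
  have e : ∫ t in Set.Ioi (0:ℝ), Complex.exp (-Complex.I * t * x) *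
      ((t : ℂ) * ((Real.log t : ℝ) : ℂ) ^ (m+1) * Complex.exp (-(t:ℂ))) =
      ∑ j ∈ Finset.range (m+1+1), (((-l) ^ (m+1-j) * ((m+1).choose j) : ℝ) : ℂ) * A j := by
    simp only [A, ← integral_const_mul]
    rw [← integral_finsetSum]
    · refine setIntegral_congr_fun measurableSet_Ioi fun t ht => ?_
      have ht' : (0:ℝ) < t := ht
      have : Real.log t = Real.log (t * |x|) + (-l) := by
        rw [Real.log_mul ht'.ne' hy0.ne']; ring
      rw [this, Complex.ofReal_add, add_pow, Finset.mul_sum, Finset.sum_mul, Finset.mul_sum]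
      refine Finset.sum_congr rfl fun j _ => ?_
      push_cast; ring
    · exact fun j _ => (hmul _ _ (hC j x hx).1).const_mul _
  rw [e, Finset.sum_range_succ']
  have h0 := special_zero x hx
  rw [mul_add, Complex.add_re]
  refine (abs_add_le _ _).trans ?_
  rw [add_mul, add_comm (2 * _)]
  refine add_le_add ?_ ?_
  · rw [Finset.mul_sum, Complex.re_sum, Finset.sum_mul]
    refine (Finset.abs_sum_le_sum_abs _ _).trans (Finset.sum_le_sum fun j hj => ?_)
    refine (Complex.abs_re_le_norm _).trans ?_
    rw [norm_mul, norm_mul, Complex.norm_I, one_mul, Complex.norm_real, Real.norm_eq_abs, abs_mul,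
      abs_pow, abs_neg, abs_of_nonneg hl, Nat.abs_cast]
    have h1 : l ^ (m + 1 - (j+1)) ≤ (1 + l) ^ m := by
      calc l ^ (m + 1 - (j+1)) ≤ (1 + l) ^ (m + 1 - (j+1)) := by gcongr; linarith
        _ ≤ _ := pow_le_pow_right₀ (by linarith) (by omega)
    have h2 : ‖A (j+1)‖ ≤ _ := (hC (j+1) x hx).2
    calc _ ≤ (1 + l) ^ m * ((m+1).choose (j+1)) * (C (j+1) * |x| ^ (-2:ℝ)) := by gcongr
      _ = _ := by ring
  · have e0 : A 0 = ∫ t in Set.Ioi (0:ℝ), Complex.exp (-Complex.I * t * x) *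
      ((t : ℂ) * Complex.exp (-(t:ℂ))) := by simp [A]
    rw [e0, ← mul_assoc, mul_comm Complex.I, mul_assoc, Complex.re_ofReal_mul, abs_mul]
    simp only [Nat.choose_zero_right, Nat.cast_one, mul_one, Nat.sub_zero]
    rw [abs_pow, abs_neg, abs_of_nonneg hl]
    have h1 : |x| ^ (-3:ℝ) = |x|⁻¹ * |x| ^ (-2:ℝ) := by
      rw [← Real.rpow_neg_one, ← Real.rpow_add hy0]; norm_num
    have h2 : l ≤ |x| := (Real.log_le_sub_one_of_pos hy0).trans (by linarith)
    have h3 : l ^ m ≤ (1 + l) ^ m := by gcongr; linarith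
    calc l ^ (m+1) * _ ≤ l ^ (m+1) * (2 * |x| ^ (-3:ℝ)) := by gcongr
      _ = 2 * (|x| ^ (-2:ℝ) * l ^ m) * (l * |x|⁻¹) := by rw [h1]; ring
      _ ≤ 2 * (|x| ^ (-2:ℝ) * (1 + l) ^ m) * 1 := by
        gcongr
        rw [← div_eq_mul_inv, div_le_one hy0]; exact h2
      _ = _ := by ring

end Special

noncomputable section EK

/-- `En j z = ∫₀¹ s^j e^{sz} ds`. -/
def En (j : ℕ) (z : ℝ) : ℝ := ∫ s in (0:ℝ)..1, s ^ j * Real.exp (s * z)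

lemma En_hasDerivAt (j : ℕ) (z : ℝ) : HasDerivAt (En j) (En (j+1) z) z := by
  have hc : ∀ (j : ℕ) (z : ℝ), Continuous fun s : ℝ => s ^ j * Real.exp (s * z) := fun j z => by fun_prop
  refine (intervalIntegral.hasDerivAt_integral_of_dominated_loc_of_deriv_le (μ := volume)
    (F := fun z s => s ^ j * Real.exp (s * z))
    (F' := fun z s => s ^ (j+1) * Real.exp (s * z)) (bound := fun _ => Real.exp (|z| + 1))
    (Metric.ball_mem_nhds z one_pos) ?_ ?_ ?_ ?_ ?_ ?_).2
  · exact Eventually.of_forall fun z => (hc j z).aestronglyMeasurable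
  · exact (hc j z).intervalIntegrable _ _
  · exact (hc (j+1) z).aestronglyMeasurable
  · refine Eventually.of_forall fun s hs y hy => ?_
    rw [Set.uIoc_of_le zero_le_one] at hs
    have h0 := hs.1
    rw [Real.norm_of_nonneg (by positivity)]
    have h1 : s ^ (j+1) ≤ 1 := pow_le_one₀ hs.1.le hs.2
    have h2 : s * y ≤ |z| + 1 := by
      rw [Metric.mem_ball, Real.dist_eq] at hy
      have h3 : |y| ≤ |z| + 1 := by
        have := abs_sub_abs_le_abs_sub y z; linarith
      calc s * y ≤ |s * y| := le_abs_self _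
        _ = s * |y| := by rw [abs_mul, abs_of_pos h0]
        _ ≤ 1 * |y| := by gcongr; exact hs.2
        _ ≤ _ := by linarith
    calc s ^ (j+1) * Real.exp (s * y) ≤ 1 * Real.exp (|z| + 1) := by gcongr
      _ = _ := one_mul _
  · exact intervalIntegrable_const
  · refine Eventually.of_forall fun s hs y hy => ?_
    have := ((hasDerivAt_id y).const_mul s).exp.const_mul (s ^ j)
    refine this.congr_deriv ?_
    simp only [id]; ring

lemma En_cont (j : ℕ) : Continuous (En j) :=
  continuous_iff_continuousAt.2 fun z => (En_hasDerivAt j z).continuousAt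

lemma En_abs_le (j : ℕ) (z : ℝ) : |En j z| ≤ 1 + Real.exp z := by
  have := intervalIntegral.norm_integral_le_of_norm_le_const (a := (0:ℝ)) (b := 1) (C := 1 + Real.exp z)
    (f := fun s : ℝ => s ^ j * Real.exp (s * z)) (fun s hs => ?_)
  · simpa [En] using this
  · rw [Set.uIoc_of_le zero_le_one] at hs
    have h0 := hs.1
    rw [Real.norm_of_nonneg (by positivity)]
    have h1 : s ^ j ≤ 1 := pow_le_one₀ hs.1.le hs.2
    have h2 : Real.exp (s * z) ≤ 1 + Real.exp z := by
      rcases le_total z 0 with hz | hz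
      · have : Real.exp (s * z) ≤ 1 := Real.exp_le_one_iff.2 (by nlinarith)
        linarith [Real.exp_pos z]
      · have : Real.exp (s * z) ≤ Real.exp z := Real.exp_le_exp.2 (by nlinarith [hs.2])
        linarith
    calc s ^ j * Real.exp (s * z) ≤ 1 * (1 + Real.exp z) := by gcongr
      _ = _ := one_mul _

lemma En_zero (j : ℕ) : En j 0 = 1 / (j + 1) := by
  simp [En, integral_pow]

lemma En_id0 (z : ℝ) : z * En 0 z = Real.exp z - 1 := by
  unfold En
  rw [← intervalIntegral.integral_const_mul]
  have := intervalIntegral.integral_eq_sub_of_hasDerivAt (a := (0:ℝ)) (b := 1)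
    (f := fun s => Real.exp (s * z)) (f' := fun s => z * (s ^ 0 * Real.exp (s * z))) (fun s _ => by
      refine ((hasDerivAt_id s).mul_const z).exp.congr_deriv ?_
      simp; ring) ((by fun_prop : Continuous fun s : ℝ => z * (s ^ 0 * Real.exp (s * z))).intervalIntegrable _ _)
  rw [this]; simp

lemma En_id1 (z : ℝ) : En 0 z + z * En 1 z = Real.exp z := by
  have h1 := (hasDerivAt_id z).mul (En_hasDerivAt 0 z)
  have h2 := (Real.hasDerivAt_exp z).sub_const 1
  have h3 : (id * En 0) = fun z => Real.exp z - 1 := by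
    ext z; exact En_id0 z
  rw [h3] at h1
  have := h1.unique h2
  simpa using this

lemma En_id2 (z : ℝ) : 2 * En 1 z + z * En 2 z = Real.exp z := by
  have h1 := (En_hasDerivAt 0 z).add ((hasDerivAt_id z).mul (En_hasDerivAt 1 z))
  have h3 : (En 0 + id * En 1) = Real.exp := by
    ext z; exact En_id1 z
  rw [h3] at h1
  have := h1.unique (Real.hasDerivAt_exp z)
  simp at this
  linarith

/-- smooth sinc -/
def Sc (x : ℝ) : ℝ := (dslope Complex.sin 0 (x : ℂ)).re

lemma Sc_contDiff : ContDiff ℝ 2 Sc := by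
  have h1 : Differentiable ℂ (dslope Complex.sin 0) := by
    have := (Complex.differentiableOn_dslope (s := Set.univ) (c := 0) (f := Complex.sin)
      Filter.univ_mem).2 Complex.differentiable_sin.differentiableOn
    exact differentiableOn_univ.1 this
  have h2 : ContDiff ℂ 2 (dslope Complex.sin 0) := h1.contDiff
  exact Complex.reCLM.contDiff.comp ((h2.restrict_scalars ℝ).comp Complex.ofRealCLM.contDiff)

lemma Sc_zero : Sc 0 = 1 := by simp [Sc, dslope_same]

lemma Sc_mul (x : ℝ) : x * Sc x = Real.sin x := by
  by_cases hx : x = 0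
  · simp [hx]
  · have : (x:ℂ) ≠ 0 := by exact_mod_cast hx
    rw [Sc, dslope_of_ne _ this, slope_def_field, Complex.sin_zero, sub_zero, sub_zero,
      ← Complex.ofReal_sin, ← Complex.ofReal_div, Complex.ofReal_re]
    field_simp

/-- regularised tangent factor -/
def Kf (e : ℝ) : ℝ := Real.cos (Real.pi * e / 2) / (Real.pi / 2 * Sc (Real.pi * e / 2))

lemma Sc_ne {e : ℝ} (he : e ∈ Set.Ioo (-1:ℝ) 1) : Sc (Real.pi * e / 2) ≠ 0 := by
  by_cases h0 : e = 0
  · simp [h0, Sc_zero]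
  · intro h
    have h1 := Sc_mul (Real.pi * e / 2)
    rw [h, mul_zero] at h1
    have hp := Real.pi_pos
    have h2 := (Real.sin_eq_zero_iff_of_lt_of_lt (by nlinarith [he.1]) (by nlinarith [he.2])).1 h1.symm
    apply h0
    have : Real.pi * e = 0 := by linarith
    simpa [hp.ne'] using this

lemma Kf_contDiffOn : ContDiffOn ℝ 2 Kf (Set.Ioo (-1) 1) := by
  have h : ContDiff ℝ 2 fun e : ℝ => Real.pi * e / 2 := by fun_prop
  refine ContDiffOn.div (Real.contDiff_cos.comp h).contDiffOn
    (contDiff_const.mul (Sc_contDiff.comp h)).contDiffOn ?_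
  intro e he
  exact mul_ne_zero (by positivity) (Sc_ne he)

lemma Kf_zero : Kf 0 = 2 / Real.pi := by
  simp [Kf, Sc_zero]

lemma Kf_tan {e : ℝ} (he : e ∈ Set.Ioo (-1:ℝ) 1) (h0 : e ≠ 0) :
    Real.tan (Real.pi * (1 + e) / 2) * e = - Kf e := by
  have hp := Real.pi_pos
  have hS := Sc_ne he
  have h1 := Sc_mul (Real.pi * e / 2)
  rw [Real.tan_eq_sin_div_cos, show Real.pi * (1 + e) / 2 = Real.pi * e / 2 + Real.pi / 2 by ring,
    Real.sin_add_pi_div_two, Real.cos_add_pi_div_two, Kf, ← h1]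
  field_simp

def K1 (e : ℝ) : ℝ := deriv Kf e
def K2 (e : ℝ) : ℝ := deriv K1 e

lemma Kf_d {e : ℝ} (he : e ∈ Set.Ioo (-1:ℝ) 1) : HasDerivAt Kf (K1 e) e :=
  ((Kf_contDiffOn.differentiableOn (by norm_num)).differentiableAt (isOpen_Ioo.mem_nhds he)).hasDerivAt

lemma K1_cd : ContDiffOn ℝ 1 K1 (Set.Ioo (-1) 1) :=
  Kf_contDiffOn.deriv_of_isOpen isOpen_Ioo (by norm_num)

lemma K1_d {e : ℝ} (he : e ∈ Set.Ioo (-1:ℝ) 1) : HasDerivAt K1 (K2 e) e :=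
  ((K1_cd.differentiableOn (by norm_num)).differentiableAt (isOpen_Ioo.mem_nhds he)).hasDerivAt

lemma K2_c : ContinuousOn K2 (Set.Ioo (-1) 1) :=
  K1_cd.continuousOn_deriv_of_isOpen isOpen_Ioo (by norm_num)

end EK

noncomputable section PF

/-- `L = log(σ t)`. -/
def Lf (θ : Fin 4 → ℝ) (t : ℝ) : ℝ := Real.log (θ 1 * t)
def Pm (m : ℕ) (θ : Fin 4 → ℝ) (t : ℝ) : ℝ := Lf θ t ^ m * Real.exp (θ 2 * Lf θ t)
def Xj (j : ℕ) (θ : Fin 4 → ℝ) (t : ℝ) : ℝ :=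
  Real.exp (Lf θ t) * Lf θ t ^ (j+1) * En j ((θ 2 - 1) * Lf θ t)
def Psi (θ : Fin 4 → ℝ) (t : ℝ) : ℂ :=
  ((-(Pm 0 θ t) : ℝ) : ℂ) + Complex.I * ((θ 0 * t - θ 3 * (Kf (θ 2 - 1) * Xj 0 θ t) : ℝ) : ℂ)

lemma Psi_eq {θ : Fin 4 → ℝ} (hθ : θ ∈ ThetaInt) {t : ℝ} (ht : 0 < t) : psiM θ t = Psi θ t := by
  obtain ⟨h1, h2, h3⟩ := hθ
  have hu : 0 < θ 1 * t := mul_pos h1 ht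
  have he : Real.exp (Lf θ t) = θ 1 * t := Real.exp_log hu
  unfold psiM Psi
  split_ifs with h
  · have hX : Xj 0 θ t = θ 1 * t * Real.log (θ 1 * t) := by
      unfold Xj; rw [he, h]; simp [En_zero, Lf]
    have hP : Pm 0 θ t = θ 1 * t := by unfold Pm; rw [h]; simp [he]
    rw [hX, hP, h, abs_of_pos hu, sub_self, Kf_zero]
    push_cast; ring
  · have hP : Pm 0 θ t = (θ 1 * t) ^ θ 2 := by
      unfold Pm; rw [Real.rpow_def_of_pos hu, Lf]; simp [mul_comm]
    have hne : θ 2 - 1 ≠ 0 := sub_ne_zero.2 h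
    have hK := Kf_tan (e := θ 2 - 1) ⟨by linarith [h2.1], by linarith [h2.2]⟩ hne
    rw [show Real.pi * (1 + (θ 2 - 1)) / 2 = Real.pi * θ 2 / 2 by ring] at hK
    have hX : (θ 2 - 1) * Xj 0 θ t = (θ 1 * t) ^ θ 2 - θ 1 * t := by
      have := En_id0 ((θ 2 - 1) * Lf θ t)
      calc (θ 2 - 1) * Xj 0 θ t = Real.exp (Lf θ t) * ((θ 2 - 1) * Lf θ t * En 0 ((θ 2 - 1) * Lf θ t)) := by
            unfold Xj; ring
        _ = Real.exp (Lf θ t) * Real.exp ((θ 2 - 1) * Lf θ t) - Real.exp (Lf θ t) := by rw [this]; ring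
        _ = _ := by
          rw [← Real.exp_add, he, show Lf θ t + (θ 2 - 1) * Lf θ t = θ 2 * Lf θ t by ring, ← hP, Pm]; simp
    have hr : (θ 1 * t) ^ θ 2 * (θ 1 * t) ^ (1 - θ 2) = θ 1 * t := by
      rw [← Real.rpow_add hu]; simp
    have hfin : θ 3 * (Kf (θ 2 - 1) * Xj 0 θ t) =
        (θ 1 * t) ^ θ 2 * (θ 3 * Real.tan (Real.pi * θ 2 / 2) * ((θ 1 * t) ^ (1 - θ 2) - 1)) := by
      have e1 : Kf (θ 2 - 1) = - (Real.tan (Real.pi * θ 2 / 2) * (θ 2 - 1)) := by linarith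
      rw [e1]
      linear_combination (-θ 3 * Real.tan (Real.pi * θ 2 / 2)) * hX - (θ 3 * Real.tan (Real.pi * θ 2 / 2)) * hr
    rw [hP, hfin, abs_of_pos hu, Real.sign_of_pos ht]
    push_cast; ring

lemma psiM_neg (θ : Fin 4 → ℝ) {t : ℝ} : psiM θ (-t) = (starRingEnd ℂ) (psiM θ t) := by
  unfold psiM
  split_ifs with h
  · simp only [mul_neg, abs_neg, map_add, map_sub, map_mul, Complex.conj_ofReal, Complex.conj_I]
    push_cast; ring
  · have hs : Real.sign (-t) = - Real.sign t := Real.sign_neg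
    simp only [mul_neg, abs_neg, hs, map_add, map_sub, map_mul, Complex.conj_ofReal, Complex.conj_I, map_one]
    push_cast; ring

lemma Pm_meas (m : ℕ) (θ : Fin 4 → ℝ) : Measurable (Pm m θ) := by
  unfold Pm Lf; fun_prop
lemma Xj_meas (m : ℕ) (θ : Fin 4 → ℝ) : Measurable (Xj m θ) := by
  have h : Measurable (Lf θ) := by unfold Lf; fun_prop
  have := (En_cont m).measurable.comp (h.const_mul (θ 2 - 1))
  unfold Xj
  exact ((h.exp).mul (h.pow_const _)).mul this
lemma Psi_meas (θ : Fin 4 → ℝ) : Measurable (Psi θ) := by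
  have h1 := Pm_meas 0 θ
  have h2 := Xj_meas 0 θ
  unfold Psi
  refine Measurable.add (Complex.measurable_ofReal.comp h1.neg) (Measurable.const_mul (Complex.measurable_ofReal.comp ?_) _)
  exact (measurable_id.const_mul _).sub ((h2.const_mul _).const_mul _)

lemma Psi_norm (θ : Fin 4 → ℝ) (t : ℝ) : ‖Complex.exp (Psi θ t)‖ = Real.exp (-(Pm 0 θ t)) := by
  rw [Complex.norm_exp]; simp [Psi]

lemma Psi_norm_le (θ : Fin 4 → ℝ) (t : ℝ) : ‖Complex.exp (Psi θ t)‖ ≤ 1 := by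
  rw [Psi_norm, Real.exp_le_one_iff]
  simp [Pm]; positivity

lemma ThetaInt_open : IsOpen ThetaInt := by
  have : ThetaInt = {θ : Fin 4 → ℝ | 0 < θ 1} ∩ ((fun θ : Fin 4 → ℝ => θ 2) ⁻¹' Set.Ioo (0:ℝ) 2 ∩
    (fun θ : Fin 4 → ℝ => θ 3) ⁻¹' Set.Ioo (-1:ℝ) 1) := rfl
  rw [this]
  exact (isOpen_lt continuous_const (continuous_apply 1)).inter
    ((isOpen_Ioo.preimage (continuous_apply 2)).inter (isOpen_Ioo.preimage (continuous_apply 3)))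

/-- Polynomial bound locally uniform in the parameter. -/
def LocBd (q : (Fin 4 → ℝ) → ℝ → ℂ) (θ : Fin 4 → ℝ) : Prop :=
  ∃ C : ℝ, ∃ R : ℕ, 0 ≤ C ∧ ∀ᶠ θ' in nhds θ, ∀ t : ℝ, 0 < t → ‖q θ' t‖ ≤ C * (1 + t) ^ R

def Good (q : (Fin 4 → ℝ) → ℝ → ℂ) : Prop :=
  (∀ θ ∈ ThetaInt, LocBd q θ) ∧ ∀ θ, Measurable (q θ)

lemma Good.mul {q r : (Fin 4 → ℝ) → ℝ → ℂ} (hq : Good q) (hr : Good r) :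
    Good (fun θ t => q θ t * r θ t) := by
  refine ⟨fun θ hθ => ?_, fun θ => (hq.2 θ).mul (hr.2 θ)⟩
  obtain ⟨C, R, hC, h⟩ := hq.1 θ hθ
  obtain ⟨C', R', hC', h'⟩ := hr.1 θ hθ
  refine ⟨C * C', R + R', by positivity, ?_⟩
  filter_upwards [h, h'] with θ' h h' t ht
  rw [norm_mul, pow_add]
  calc _ ≤ (C * (1+t)^R) * (C' * (1+t)^R') := by gcongr; exacts [h t ht, h' t ht]
    _ = _ := by ring

lemma Good.add {q r : (Fin 4 → ℝ) → ℝ → ℂ} (hq : Good q) (hr : Good r) :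
    Good (fun θ t => q θ t + r θ t) := by
  refine ⟨fun θ hθ => ?_, fun θ => (hq.2 θ).add (hr.2 θ)⟩
  obtain ⟨C, R, hC, h⟩ := hq.1 θ hθ
  obtain ⟨C', R', hC', h'⟩ := hr.1 θ hθ
  refine ⟨C + C', R + R', by positivity, ?_⟩
  filter_upwards [h, h'] with θ' h h' t ht
  calc _ ≤ ‖q θ' t‖ + ‖r θ' t‖ := norm_add_le _ _
    _ ≤ C * (1+t)^R + C' * (1+t)^R' := add_le_add (h t ht) (h' t ht)
    _ ≤ C * (1+t)^(R+R') + C' * (1+t)^(R+R') := by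
      gcongr <;> first | linarith | omega
    _ = _ := by ring

lemma Good.coef {f : (Fin 4 → ℝ) → ℝ} (hf : ContinuousOn f ThetaInt) :
    Good (fun θ _ => (f θ : ℂ)) := by
  refine ⟨fun θ hθ => ⟨|f θ| + 1, 0, by positivity, ?_⟩, fun θ => measurable_const⟩
  have hc : ContinuousAt (fun θ => |f θ|) θ := (hf.continuousAt (ThetaInt_open.mem_nhds hθ)).abs
  filter_upwards [hc.eventually_lt_const (lt_add_one |f θ|)] with θ' h t ht
  simpa using h.le

lemma Good.const (c : ℂ) : Good (fun _ _ => c) :=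
  ⟨fun θ hθ => ⟨‖c‖, 0, norm_nonneg _, Eventually.of_forall fun _ t _ => by simp⟩, fun θ => measurable_const⟩

lemma Lpow_bound (m : ℕ) {a1 a L : ℝ} (h1 : 0 < a1) (h2 : a1 ≤ a) (h3 : a ≤ 2) :
    |L| ^ m * Real.exp (a * L) ≤ m.factorial / a1 ^ m + Real.exp L ^ (m + 2) := by
  rcases le_total L 0 with hL | hL
  · have e1 : Real.exp (a * L) ≤ Real.exp (a1 * L) := Real.exp_le_exp.2 (by nlinarith)
    have e2 := Real.pow_div_factorial_le_exp (x := a1 * |L|) (by positivity) m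
    have e3 : Real.exp (a1 * L) * Real.exp (a1 * |L|) = 1 := by
      rw [← Real.exp_add, abs_of_nonpos hL]; simp
    have e4 : |L| ^ m ≤ m.factorial / a1 ^ m * Real.exp (a1 * |L|) := by
      rw [mul_pow, div_le_iff₀ (by positivity)] at e2
      rw [div_mul_eq_mul_div, le_div_iff₀ (by positivity)]; linarith
    calc |L| ^ m * Real.exp (a * L) ≤ (m.factorial / a1 ^ m * Real.exp (a1 * |L|)) * Real.exp (a1 * L) := by gcongr
      _ = m.factorial / a1 ^ m := by linear_combination (m.factorial / a1 ^ m) * e3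
      _ ≤ _ := by have := Real.exp_pos L; linarith [pow_pos this (m+2)]
  · have e1 : Real.exp (a * L) ≤ Real.exp L ^ 2 := by
      rw [← Real.exp_nat_mul]; exact Real.exp_le_exp.2 (by push_cast; nlinarith)
    have e2 : |L| ≤ Real.exp L := by rw [abs_of_nonneg hL]; linarith [Real.add_one_le_exp L]
    calc |L| ^ m * Real.exp (a * L) ≤ Real.exp L ^ m * Real.exp L ^ 2 := by gcongr
      _ = Real.exp L ^ (m+2) := by rw [pow_add]
      _ ≤ _ := by have : 0 ≤ m.factorial / a1 ^ m := by positivity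
                  linarith

lemma locpar {θ : Fin 4 → ℝ} (hθ : θ ∈ ThetaInt) : ∀ᶠ θ' in nhds θ,
    θ' ∈ ThetaInt ∧ θ 1 / 2 ≤ θ' 1 ∧ θ' 1 ≤ θ 1 + 1 ∧ θ 2 / 2 ≤ θ' 2 ∧ θ' 2 ≤ 2 := by
  have c1 : ContinuousAt (fun θ : Fin 4 → ℝ => θ 1) θ := (continuous_apply 1).continuousAt
  have c2 : ContinuousAt (fun θ : Fin 4 → ℝ => θ 2) θ := (continuous_apply 2).continuousAt
  filter_upwards [ThetaInt_open.mem_nhds hθ, c1.eventually_const_lt (half_lt_self hθ.1),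
    c1.eventually_lt_const (lt_add_one _), c2.eventually_const_lt (half_lt_self hθ.2.1.1)] with θ' h0 h1 h2 h3
  exact ⟨h0, h1.le, h2.le, h3.le, h0.2.1.2.le⟩

lemma Lpow_loc (m : ℕ) {θ : Fin 4 → ℝ} (hθ : θ ∈ ThetaInt) : ∃ C : ℝ, 0 ≤ C ∧ ∀ᶠ θ' in nhds θ, ∀ t : ℝ, 0 < t →
    |Lf θ' t| ^ m * Real.exp (θ' 2 * Lf θ' t) ≤ C * (1 + t) ^ (m+2) ∧
    |Lf θ' t| ^ m * Real.exp (Lf θ' t) ≤ C * (1 + t) ^ (m+2) := by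
  have ha : 0 < θ 2 / 2 := half_pos hθ.2.1.1
  have ha1 : θ 2 / 2 ≤ 1 := by linarith [hθ.2.1.2]
  have hs := hθ.1
  refine ⟨m.factorial / (θ 2 / 2) ^ m + (θ 1 + 1) ^ (m+2), by positivity, ?_⟩
  filter_upwards [locpar hθ] with θ' ⟨h0, h1, h2, h3, h4⟩ t ht
  have hu : Real.exp (Lf θ' t) = θ' 1 * t := Real.exp_log (mul_pos h0.1 ht)
  have hp := h0.1
  have key : m.factorial / (θ 2 / 2) ^ m + Real.exp (Lf θ' t) ^ (m + 2) ≤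
      (m.factorial / (θ 2 / 2) ^ m + (θ 1 + 1) ^ (m+2)) * (1 + t) ^ (m+2) := by
    rw [hu, add_mul]
    have e1 : (1:ℝ) ≤ (1+t)^(m+2) := one_le_pow₀ (by linarith)
    have e2 : (θ' 1 * t) ^ (m+2) ≤ (θ 1 + 1) ^ (m+2) * (1 + t) ^ (m+2) := by
      rw [← mul_pow]; gcongr; linarith
    have e3 : 0 ≤ m.factorial / (θ 2 / 2) ^ m := by positivity
    nlinarith
  have b2 := Lpow_bound m (L := Lf θ' t) ha ha1 (by norm_num : (1:ℝ) ≤ 2)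
  rw [one_mul] at b2
  exact ⟨(Lpow_bound m ha h3 h4).trans key, b2.trans key⟩

lemma Pm_good (m : ℕ) : Good (fun θ t => (Pm m θ t : ℂ)) := by
  refine ⟨fun θ hθ => ?_, fun θ => Complex.measurable_ofReal.comp (Pm_meas m θ)⟩
  obtain ⟨C, hC, h⟩ := Lpow_loc m hθ
  refine ⟨C, m+2, hC, ?_⟩
  filter_upwards [h] with θ' h t ht
  refine le_trans (le_of_eq ?_) (h t ht).1
  rw [Complex.norm_real, Real.norm_eq_abs, Pm, abs_mul, abs_pow, abs_of_pos (Real.exp_pos _)]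

lemma Xj_good (m : ℕ) : Good (fun θ t => (Xj m θ t : ℂ)) := by
  refine ⟨fun θ hθ => ?_, fun θ => Complex.measurable_ofReal.comp (Xj_meas m θ)⟩
  obtain ⟨C, hC, h⟩ := Lpow_loc (m+1) hθ
  refine ⟨2 * C, m+1+2, by positivity, ?_⟩
  filter_upwards [h] with θ' h t ht
  rw [Complex.norm_real, Real.norm_eq_abs, Xj, abs_mul, abs_mul, abs_pow, abs_of_pos (Real.exp_pos _)]
  calc _ ≤ Real.exp (Lf θ' t) * |Lf θ' t| ^ (m+1) * (1 + Real.exp ((θ' 2 - 1) * Lf θ' t)) := by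
        gcongr; exact En_abs_le _ _
    _ = |Lf θ' t| ^ (m+1) * Real.exp (Lf θ' t) + |Lf θ' t| ^ (m+1) * Real.exp (θ' 2 * Lf θ' t) := by
        rw [show θ' 2 * Lf θ' t = Lf θ' t + (θ' 2 - 1) * Lf θ' t by ring, Real.exp_add]; ring
    _ ≤ C * (1+t)^(m+1+2) + C * (1+t)^(m+1+2) := add_le_add (h t ht).2 (h t ht).1
    _ = _ := by ring

lemma Psi_decay {θ : Fin 4 → ℝ} (hθ : θ ∈ ThetaInt) (N : ℝ) : ∃ C : ℝ, 0 ≤ C ∧ ∀ᶠ θ' in nhds θ, ∀ t : ℝ, 0 < t →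
    ‖Complex.exp (Psi θ' t)‖ ≤ C * (1 + t) ^ N := by
  have ha : 0 < θ 2 / 2 := half_pos hθ.2.1.1
  have hs : 0 < θ 1 / 2 := half_pos hθ.1
  obtain ⟨C, hC, h⟩ := exp_neg_bdW N (c := (θ 1 / 2) ^ (θ 2 / 2)) (Real.rpow_pos_of_pos hs _) ha
  refine ⟨Real.exp 1 * C, by positivity, ?_⟩
  filter_upwards [locpar hθ] with θ' ⟨h0, h1, h2, h3, h4⟩ t ht
  have hu : Real.exp (Lf θ' t) = θ' 1 * t := Real.exp_log (mul_pos h0.1 ht)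
  have hp : 0 < θ' 1 * t := mul_pos h0.1 ht
  have hP : Pm 0 θ' t = (θ' 1 * t) ^ θ' 2 := by
    unfold Pm; rw [Real.rpow_def_of_pos hp, Lf]; simp [mul_comm]
  have h5 : (θ' 1 * t) ^ (θ 2 / 2) - 1 ≤ (θ' 1 * t) ^ θ' 2 := by
    rcases le_total (θ' 1 * t) 1 with hl | hl
    · have := Real.rpow_le_one hp.le hl ha.le
      have := Real.rpow_nonneg hp.le (θ' 2)
      linarith
    · have := Real.rpow_le_rpow_of_exponent_le hl h3
      linarith
  have h6 : (θ 1 / 2) ^ (θ 2 / 2) * t ^ (θ 2 / 2) ≤ (θ' 1 * t) ^ (θ 2 / 2) := by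
    rw [← Real.mul_rpow hs.le ht.le]; gcongr
  rw [Psi_norm, hP]
  calc Real.exp (-(θ' 1 * t) ^ θ' 2) ≤ Real.exp (1 + -((θ 1 / 2) ^ (θ 2 / 2) * t ^ (θ 2 / 2))) := 
        Real.exp_le_exp.2 (by linarith)
    _ = Real.exp 1 * Real.exp (-((θ 1 / 2) ^ (θ 2 / 2) * t ^ (θ 2 / 2))) := Real.exp_add _ _
    _ ≤ Real.exp 1 * (C * (1+t)^N) := by gcongr; exact h t ht
    _ = _ := by ring

end PF

noncomputable section JInt

/-- Half-line Fourier integral with amplitude `q`. -/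
def Jq (q : (Fin 4 → ℝ) → ℝ → ℂ) (θ : Fin 4 → ℝ) (x : ℝ) : ℂ :=
  ∫ t in Set.Ioi (0:ℝ), Complex.exp (-Complex.I * t * x) * (Complex.exp (Psi θ t) * q θ t)

lemma Good.decay {q : (Fin 4 → ℝ) → ℝ → ℂ} (hq : Good q) {θ : Fin 4 → ℝ} (hθ : θ ∈ ThetaInt) (x : ℝ) :
    ∃ C : ℝ, ∀ᶠ θ' in nhds θ, ∀ t : ℝ, 0 < t →
      ‖Complex.exp (-Complex.I * t * x) * (Complex.exp (Psi θ' t) * q θ' t)‖ ≤ C * (1 + t) ^ (-2 : ℝ) := by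
  obtain ⟨C, R, hC, h⟩ := hq.1 θ hθ
  obtain ⟨C', hC', h'⟩ := Psi_decay hθ (-2 - R)
  refine ⟨C' * C, ?_⟩
  filter_upwards [h, h'] with θ' h h' t ht
  rw [norm_mul, norm_osc, one_mul, norm_mul]
  calc _ ≤ (C' * (1+t)^(-2 - (R:ℝ))) * (C * (1+t)^R) := by gcongr; exacts [h' t ht, h t ht]
    _ = C' * C * ((1+t)^(-2 - (R:ℝ)) * (1+t)^(R:ℝ)) := by rw [Real.rpow_natCast]; ring
    _ = _ := by rw [← Real.rpow_add (by linarith)]; simp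

lemma bound_int (C : ℝ) : IntegrableOn (fun t : ℝ => C * (1 + t) ^ (-2:ℝ)) (Set.Ioi 0) := by
  refine Integrable.const_mul ?_ C
  have := integrableOn_add_rpow_Ioi_of_lt (a := -2) (c := 0) (m := 1) (by norm_num) (by norm_num)
  simpa only [add_comm] using this.integrable

lemma Good.meas {q : (Fin 4 → ℝ) → ℝ → ℂ} (hq : Good q) (θ : Fin 4 → ℝ) (x : ℝ) :
    Measurable fun t : ℝ => Complex.exp (-Complex.I * t * x) * (Complex.exp (Psi θ t) * q θ t) := by
  have h1 : Measurable fun t : ℝ => Complex.exp (-Complex.I * t * x) := by fun_prop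
  exact h1.mul ((Psi_meas θ).cexp.mul (hq.2 θ))

lemma Good.integ {q : (Fin 4 → ℝ) → ℝ → ℂ} (hq : Good q) {θ : Fin 4 → ℝ} (hθ : θ ∈ ThetaInt) (x : ℝ) :
    IntegrableOn (fun t : ℝ => Complex.exp (-Complex.I * t * x) * (Complex.exp (Psi θ t) * q θ t)) (Set.Ioi 0) := by
  obtain ⟨C, h⟩ := hq.decay hθ x
  refine (bound_int C).mono' (hq.meas θ x).aestronglyMeasurable ?_
  exact (ae_restrict_iff' measurableSet_Ioi).2 (Eventually.of_forall fun t ht => h.self_of_nhds t ht)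

lemma upd_cont (θ : Fin 4 → ℝ) (j : Fin 4) : Tendsto (fun s => Function.update θ j s) (nhds (θ j)) (nhds θ) := by
  have h : Continuous (fun s => Function.update θ j s) := continuous_const.update j continuous_id
  have := h.tendsto (θ j)
  rwa [Function.update_eq_self] at this

lemma Jq_deriv {q q' p : (Fin 4 → ℝ) → ℝ → ℂ} (j : Fin 4) (hq : Good q) (hq' : Good q') (hp : Good p)
    (dq : ∀ θ ∈ ThetaInt, ∀ t : ℝ, 0 < t → HasDerivAt (fun s => q (Function.update θ j s) t) (q' θ t) (θ j))
    (dp : ∀ θ ∈ ThetaInt, ∀ t : ℝ, 0 < t → HasDerivAt (fun s => Psi (Function.update θ j s) t) (p θ t) (θ j))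
    {θ : Fin 4 → ℝ} (hθ : θ ∈ ThetaInt) (x : ℝ) :
    HasDerivAt (fun s => Jq q (Function.update θ j s) x)
      (Jq (fun θ t => p θ t * q θ t + q' θ t) θ x) (θ j) := by
  have hg : Good (fun θ t => p θ t * q θ t + q' θ t) := (hp.mul hq).add hq'
  obtain ⟨C, hC⟩ := hg.decay hθ x
  have hev := (upd_cont θ j).eventually ((ThetaInt_open.eventually_mem hθ).and hC)
  have key := (hasDerivAt_integral_of_dominated_loc_of_deriv_le (μ := volume.restrict (Set.Ioi (0:ℝ)))
    (F := fun s t => Complex.exp (-Complex.I * t * x) * (Complex.exp (Psi (Function.update θ j s) t) * q (Function.update θ j s) t))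
    (F' := fun s t => Complex.exp (-Complex.I * t * x) * (Complex.exp (Psi (Function.update θ j s) t) * 
      (p (Function.update θ j s) t * q (Function.update θ j s) t + q' (Function.update θ j s) t)))
    (bound := fun t => C * (1+t)^(-2:ℝ)) (x₀ := θ j) hev ?_ ?_ ?_ ?_ (bound_int C) ?_).2
  · refine key.congr_deriv ?_
    rw [Function.update_eq_self]; rfl
  · exact Eventually.of_forall fun s => (hq.meas _ x).aestronglyMeasurable
  · rw [Function.update_eq_self]; exact hq.integ hθ x
  · exact (hg.meas _ x).aestronglyMeasurable
  · exact (ae_restrict_iff' measurableSet_Ioi).2 (Eventually.of_forall fun t ht s hs => hs.2 t ht)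
  · refine (ae_restrict_iff' measurableSet_Ioi).2 (Eventually.of_forall fun t ht s hs => ?_)
    have h1 := dq _ hs.1 t ht
    have h2 := dp _ hs.1 t ht
    simp only [Function.update_idem, Function.update_self] at h1 h2
    refine ((h2.cexp.mul h1).const_mul _).congr_deriv ?_
    ring

lemma fM_eq {θ : Fin 4 → ℝ} (hθ : θ ∈ ThetaInt) (x : ℝ) :
    fM θ x = (1 / Real.pi) * (Jq (fun _ _ => 1) θ x).re := by
  set F : ℝ → ℂ := fun t => Complex.exp (-Complex.I * (t : ℂ) * (x : ℂ)) * phiM θ t with hF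
  have hpos : ∀ t ∈ Set.Ioi (0:ℝ), F t = Complex.exp (-Complex.I * t * x) * (Complex.exp (Psi θ t) * 1) := by
    intro t ht
    simp only [hF, phiM, Psi_eq hθ ht, mul_one]
  have hneg : ∀ t, F (-t) = (starRingEnd ℂ) (F t) := by
    intro t
    simp only [hF, phiM, psiM_neg, map_mul, ← Complex.exp_conj]
    simp
  have hi : IntegrableOn F (Set.Ioi 0) :=
    ((Good.const 1).integ hθ x).congr_fun (fun t ht => (hpos t ht).symm) measurableSet_Ioi
  have hi2 : IntegrableOn F (Set.Iic 0) := by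
    have h1 : IntegrableOn (fun t => F (-t)) (Set.Ioi 0) := by
      simp only [hneg]
      exact Complex.conjCLE.toContinuousLinearMap.integrable_comp hi
    have := h1.comp_neg
    rw [integrableOn_Iic_iff_integrableOn_Iio]
    simpa using this
  have hJ : ∫ t in Set.Ioi (0:ℝ), F t = Jq (fun _ _ => 1) θ x := setIntegral_congr_fun measurableSet_Ioi hpos
  have hs : ∫ t, F t = (∫ t in Set.Iic (0:ℝ), F t) + ∫ t in Set.Ioi (0:ℝ), F t :=
    (intervalIntegral.integral_Iic_add_Ioi hi2 hi).symm
  have hI : ∫ t in Set.Iic (0:ℝ), F t = (starRingEnd ℂ) (∫ t in Set.Ioi (0:ℝ), F t) := by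
    have := integral_comp_neg_Ioi 0 F
    rw [neg_zero] at this
    rw [← this, ← integral_conj]
    simp only [hneg]
  have : fM θ x = (1 / (2 * Real.pi)) * (∫ t, F t).re := rfl
  rw [this, hs, hI, Complex.add_re, Complex.conj_re, hJ]
  field_simp; ring

end JInt

noncomputable section PsiD

abbrev Fam := (Fin 4 → ℝ) → ℝ → ℂ

lemma Lf_ds {θ : Fin 4 → ℝ} (hθ : θ ∈ ThetaInt) {t : ℝ} (ht : 0 < t) :
    HasDerivAt (fun s => Lf (Function.update θ 1 s) t) (1 / θ 1) (θ 1) := by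
  have h1 := hθ.1
  have := ((hasDerivAt_id (θ 1)).mul_const t).log (mul_pos h1 ht).ne'
  simp only [Lf, Function.update_self]
  refine this.congr_deriv ?_
  simp only [id]; field_simp

lemma Pm0_ds {θ : Fin 4 → ℝ} (hθ : θ ∈ ThetaInt) {t : ℝ} (ht : 0 < t) :
    HasDerivAt (fun s => Pm 0 (Function.update θ 1 s) t) (θ 2 / θ 1 * Pm 0 θ t) (θ 1) := by
  have := ((Lf_ds hθ ht).const_mul (θ 2)).exp
  simp only [Function.update_eq_self] at this
  simp only [Pm, pow_zero, one_mul, Function.update_of_ne (show (2 : Fin 4) ≠ 1 by decide)]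
  refine this.congr_deriv ?_
  ring

lemma Xj0_ds {θ : Fin 4 → ℝ} (hθ : θ ∈ ThetaInt) {t : ℝ} (ht : 0 < t) :
    HasDerivAt (fun s => Xj 0 (Function.update θ 1 s) t) ((Xj 0 θ t + Pm 0 θ t) / θ 1) (θ 1) := by
  have hL := Lf_ds hθ ht
  have hE := (En_hasDerivAt 0 ((θ 2 - 1) * Lf θ t))
  have hE2 := HasDerivAt.comp (θ 1) (h := fun s => (θ 2 - 1) * Lf (Function.update θ 1 s) t) (h₂ := En 0)
    (by simpa only [Function.update_eq_self] using hE) (hL.const_mul (θ 2 - 1))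
  have := (hL.exp.mul hL).mul hE2
  simp only [Function.update_eq_self] at this
  simp only [Xj, zero_add, pow_one, Function.update_of_ne (show (2 : Fin 4) ≠ 1 by decide)]
  refine this.congr_deriv ?_
  have h1 := En_id1 ((θ 2 - 1) * Lf θ t)
  have h2 : Real.exp (θ 2 * Lf θ t) = Real.exp (Lf θ t) * (En 0 ((θ 2 - 1) * Lf θ t)
      + (θ 2 - 1) * Lf θ t * En 1 ((θ 2 - 1) * Lf θ t)) := by
    rw [h1, ← Real.exp_add]; ring_nf
  simp only [Pm, pow_zero, one_mul, h2, Function.comp, Function.update_eq_self, Pi.mul_apply]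
  ring_nf

lemma Pm_da (m : ℕ) (θ : Fin 4 → ℝ) (t : ℝ) :
    HasDerivAt (fun s => Pm m (Function.update θ 2 s) t) (Pm (m+1) θ t) (θ 2) := by
  have := ((hasDerivAt_id (θ 2)).mul_const (Lf θ t)).exp.const_mul (Lf θ t ^ m)
  have h : ∀ s, Lf (Function.update θ 2 s) t = Lf θ t := fun s => by simp [Lf]
  simp only [Pm, Function.update_self, h]
  refine this.congr_deriv ?_
  simp only [id]; ring

lemma Xj_da (m : ℕ) (θ : Fin 4 → ℝ) (t : ℝ) :
    HasDerivAt (fun s => Xj m (Function.update θ 2 s) t) (Xj (m+1) θ t) (θ 2) := by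
  have h : ∀ s, Lf (Function.update θ 2 s) t = Lf θ t := fun s => by simp [Lf]
  have hE2 := HasDerivAt.comp (θ 2) (h := fun s => (s - 1) * Lf θ t) (h₂ := En m)
    (En_hasDerivAt m _) (((hasDerivAt_id (θ 2)).sub_const 1).mul_const (Lf θ t))
  have := hE2.const_mul (Real.exp (Lf θ t) * Lf θ t ^ (m+1))
  simp only [Xj, Function.update_self, h]
  refine this.congr_deriv ?_
  ring

lemma epsm {θ : Fin 4 → ℝ} (hθ : θ ∈ ThetaInt) : θ 2 - 1 ∈ Set.Ioo (-1:ℝ) 1 :=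
  ⟨by linarith [hθ.2.1.1], by linarith [hθ.2.1.2]⟩

lemma Kf_da {θ : Fin 4 → ℝ} (hθ : θ ∈ ThetaInt) : HasDerivAt (fun s => Kf (s - 1)) (K1 (θ 2 - 1)) (θ 2) :=
  (Kf_d (epsm hθ)).comp_sub_const (θ 2) 1
lemma K1_da {θ : Fin 4 → ℝ} (hθ : θ ∈ ThetaInt) : HasDerivAt (fun s => K1 (s - 1)) (K2 (θ 2 - 1)) (θ 2) :=
  (K1_d (epsm hθ)).comp_sub_const (θ 2) 1

/-- first derivatives of the exponent -/
def D1 : Fam := fun θ t => ((-(θ 2 / θ 1 * Pm 0 θ t) : ℝ) : ℂ) +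
  Complex.I * ((-(θ 3 / θ 1 * Kf (θ 2 - 1) * (Xj 0 θ t + Pm 0 θ t)) : ℝ) : ℂ)
def D2 : Fam := fun θ t => ((-(Pm 1 θ t) : ℝ) : ℂ) +
  Complex.I * ((-(θ 3 * (K1 (θ 2 - 1) * Xj 0 θ t + Kf (θ 2 - 1) * Xj 1 θ t)) : ℝ) : ℂ)
def D3 : Fam := fun θ t => ((0 : ℝ) : ℂ) + Complex.I * ((-(Kf (θ 2 - 1) * Xj 0 θ t) : ℝ) : ℂ)
def D11 : Fam := fun θ t => (((θ 2 / θ 1 ^ 2 - θ 2 ^ 2 / θ 1 ^ 2) * Pm 0 θ t : ℝ) : ℂ) +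
  Complex.I * ((θ 3 / θ 1 ^ 2 * Kf (θ 2 - 1) * (Xj 0 θ t + Pm 0 θ t)
    - θ 3 / θ 1 * Kf (θ 2 - 1) * ((Xj 0 θ t + Pm 0 θ t) / θ 1 + θ 2 / θ 1 * Pm 0 θ t) : ℝ) : ℂ)
def D12 : Fam := fun θ t => ((-(1 / θ 1 * Pm 0 θ t) - θ 2 / θ 1 * Pm 1 θ t : ℝ) : ℂ) +
  Complex.I * ((-(θ 3 / θ 1 * (K1 (θ 2 - 1) * (Xj 0 θ t + Pm 0 θ t) + Kf (θ 2 - 1) * (Xj 1 θ t + Pm 1 θ t))) : ℝ) : ℂ)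
def D13 : Fam := fun θ t => ((0 : ℝ) : ℂ) +
  Complex.I * ((-(1 / θ 1 * Kf (θ 2 - 1) * (Xj 0 θ t + Pm 0 θ t)) : ℝ) : ℂ)
def D22 : Fam := fun θ t => ((-(Pm 2 θ t) : ℝ) : ℂ) +
  Complex.I * ((-(θ 3 * (K2 (θ 2 - 1) * Xj 0 θ t + 2 * K1 (θ 2 - 1) * Xj 1 θ t + Kf (θ 2 - 1) * Xj 2 θ t)) : ℝ) : ℂ)
def D23 : Fam := fun θ t => ((0 : ℝ) : ℂ) +
  Complex.I * ((-(K1 (θ 2 - 1) * Xj 0 θ t + Kf (θ 2 - 1) * Xj 1 θ t) : ℝ) : ℂ)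
def D33 : Fam := fun θ t => ((0 : ℝ) : ℂ) + Complex.I * ((0 : ℝ) : ℂ)

lemma cd {a b : ℝ → ℝ} {a' b' : ℝ} {s : ℝ} (ha : HasDerivAt a a' s) (hb : HasDerivAt b b' s) :
    HasDerivAt (fun s => ((a s : ℝ) : ℂ) + Complex.I * ((b s : ℝ) : ℂ)) ((a' : ℂ) + Complex.I * (b' : ℂ)) s :=
  ha.ofReal_comp.add (hb.ofReal_comp.const_mul _)

def IsD (j : Fin 4) (q q' : Fam) : Prop :=
  ∀ θ ∈ ThetaInt, ∀ t : ℝ, 0 < t → HasDerivAt (fun s => q (Function.update θ j s) t) (q' θ t) (θ j)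

lemma ne01 : (0 : Fin 4) ≠ 1 := by decide
lemma ne02 : (0 : Fin 4) ≠ 2 := by decide
lemma ne03 : (0 : Fin 4) ≠ 3 := by decide
lemma ne21 : (2 : Fin 4) ≠ 1 := by decide
lemma ne31 : (3 : Fin 4) ≠ 1 := by decide
lemma ne12 : (1 : Fin 4) ≠ 2 := by decide
lemma ne32 : (3 : Fin 4) ≠ 2 := by decide
lemma ne13 : (1 : Fin 4) ≠ 3 := by decide
lemma ne23 : (2 : Fin 4) ≠ 3 := by decide

lemma Pm_u3 (m : ℕ) (θ : Fin 4 → ℝ) (s t : ℝ) : Pm m (Function.update θ 3 s) t = Pm m θ t := by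
  simp [Pm, Lf]
lemma Xj_u3 (m : ℕ) (θ : Fin 4 → ℝ) (s t : ℝ) : Xj m (Function.update θ 3 s) t = Xj m θ t := by
  simp [Xj, Lf]

lemma dPsi1 : IsD 1 Psi D1 := by
  intro θ hθ t ht
  simp only [Psi, D1, Function.update_self, Function.update_of_ne ne01, Function.update_of_ne ne21, Function.update_of_ne ne31]
  refine cd (Pm0_ds hθ ht).fun_neg ((((Xj0_ds hθ ht).const_mul _).const_mul _).const_sub _ |>.congr_deriv ?_)
  ring

lemma dPsi2 : IsD 2 Psi D2 := by
  intro θ hθ t ht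
  simp only [Psi, D2, Function.update_self, Function.update_of_ne ne02, Function.update_of_ne ne12, Function.update_of_ne ne32]
  refine cd (Pm_da 0 θ t).fun_neg ((((Kf_da hθ).fun_mul (Xj_da 0 θ t)).const_mul _).const_sub _ |>.congr_deriv ?_)
  simp only [Function.update_eq_self]

lemma dPsi3 : IsD 3 Psi D3 := by
  intro θ hθ t ht
  simp only [Psi, D3, Function.update_self, Function.update_of_ne ne03, Function.update_of_ne ne13, Function.update_of_ne ne23, Pm_u3, Xj_u3]
  refine cd (hasDerivAt_const _ _) (((hasDerivAt_id (θ 3)).mul_const _).const_sub _ |>.congr_deriv ?_)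
  ring

lemma dD11 : IsD 1 D1 D11 := by
  intro θ hθ t ht
  have h1 := hθ.1.ne'
  simp only [D1, D11, Function.update_self, Function.update_of_ne ne01, Function.update_of_ne ne21, Function.update_of_ne ne31]
  have hi : ∀ c : ℝ, HasDerivAt (fun s => c / s) (-c / θ 1 ^ 2) (θ 1) := fun c => by
    have := (hasDerivAt_inv h1).const_mul c
    refine (this.congr_deriv ?_)
    ring
  refine cd (((hi (θ 2)).fun_mul (Pm0_ds hθ ht)).fun_neg.congr_deriv ?_)
    ((((hi (θ 3)).mul_const (Kf (θ 2 - 1))).fun_mul ((Xj0_ds hθ ht).fun_add (Pm0_ds hθ ht))).fun_neg.congr_deriv ?_)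
  · simp only [Function.update_eq_self]; field_simp; ring
  · simp only [Function.update_eq_self]; field_simp; ring

lemma dD12 : IsD 2 D1 D12 := by
  intro θ hθ t ht
  simp only [D1, D12, Function.update_self, Function.update_of_ne ne02, Function.update_of_ne ne12, Function.update_of_ne ne32]
  refine cd ((((hasDerivAt_id (θ 2)).div_const (θ 1)).fun_mul (Pm_da 0 θ t)).fun_neg.congr_deriv ?_)
    ((((Kf_da hθ).const_mul (θ 3 / θ 1)).fun_mul ((Xj_da 0 θ t).fun_add (Pm_da 0 θ t))).fun_neg.congr_deriv ?_)
  · simp only [Function.update_eq_self, id]; ring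
  · simp only [Function.update_eq_self]; ring

lemma dD13 : IsD 3 D1 D13 := by
  intro θ hθ t ht
  simp only [D1, D13, Function.update_self, Function.update_of_ne ne03, Function.update_of_ne ne13, Function.update_of_ne ne23, Pm_u3, Xj_u3]
  exact cd (hasDerivAt_const _ _) ((((hasDerivAt_id (θ 3)).div_const (θ 1)).mul_const _).mul_const _).fun_neg

lemma dD22 : IsD 2 D2 D22 := by
  intro θ hθ t ht
  simp only [D2, D22, Function.update_self, Function.update_of_ne ne02, Function.update_of_ne ne12, Function.update_of_ne ne32]
  refine cd (Pm_da 1 θ t).fun_neg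
    (((((K1_da hθ).fun_mul (Xj_da 0 θ t)).fun_add ((Kf_da hθ).fun_mul (Xj_da 1 θ t))).const_mul (θ 3)).fun_neg.congr_deriv ?_)
  simp only [Function.update_eq_self]; ring

lemma dD23 : IsD 3 D2 D23 := by
  intro θ hθ t ht
  simp only [D2, D23, Function.update_self, Function.update_of_ne ne03, Function.update_of_ne ne13, Function.update_of_ne ne23, Pm_u3, Xj_u3]
  refine cd (hasDerivAt_const _ _) (((hasDerivAt_id (θ 3)).mul_const _).fun_neg.congr_deriv ?_)
  ring

lemma dD33 : IsD 3 D3 D33 := by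
  intro θ hθ t ht
  simp only [D3, D33, Function.update_self, Function.update_of_ne ne03, Function.update_of_ne ne13, Function.update_of_ne ne23, Pm_u3, Xj_u3]
  exact cd (hasDerivAt_const _ _) (hasDerivAt_const _ _)

lemma IsD_one (j : Fin 4) : IsD j (fun _ _ => 1) (fun _ _ => 0) := fun θ _ t _ => hasDerivAt_const _ _

/-- Linear combinations of the basic symbols. -/
inductive IsLC : ℕ → Fam → Prop
  | P {k m : ℕ} (hm : m ≤ k) {f : (Fin 4 → ℝ) → ℝ} (hf : ContinuousOn f ThetaInt) (c : ℂ) :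
      IsLC k (fun θ t => c * ((f θ : ℂ) * (Pm m θ t : ℂ)))
  | X {k j : ℕ} (hj : j ≤ k) {f : (Fin 4 → ℝ) → ℝ} (hf : ContinuousOn f ThetaInt) :
      IsLC k (fun θ t => Complex.I * ((f θ : ℂ) * (Xj j θ t : ℂ)))
  | add {k : ℕ} {q r : Fam} (hq : IsLC k q) (hr : IsLC k r) : IsLC k (fun θ t => q θ t + r θ t)

lemma IsLC.good {k : ℕ} {q : Fam} (h : IsLC k q) : Good q := by
  induction h with
  | P hm hf c => exact (Good.const c).mul ((Good.coef hf).mul (Pm_good _))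
  | X hj hf => exact (Good.const Complex.I).mul ((Good.coef hf).mul (Xj_good _))
  | add _ _ h1 h2 => exact h1.add h2

lemma c1 : ContinuousOn (fun θ : Fin 4 → ℝ => (θ 1)⁻¹) ThetaInt :=
  ContinuousOn.inv₀ (continuous_apply 1).continuousOn fun θ hθ => hθ.1.ne'
lemma c2 : ContinuousOn (fun θ : Fin 4 → ℝ => θ 2) ThetaInt := (continuous_apply 2).continuousOn
lemma c3 : ContinuousOn (fun θ : Fin 4 → ℝ => θ 3) ThetaInt := (continuous_apply 3).continuousOn
lemma ceps : ContinuousOn (fun θ : Fin 4 → ℝ => θ 2 - 1) ThetaInt := c2.sub continuousOn_const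
lemma cK : ContinuousOn (fun θ : Fin 4 → ℝ => Kf (θ 2 - 1)) ThetaInt :=
  Kf_contDiffOn.continuousOn.comp ceps fun _ hθ => epsm hθ
lemma cK1 : ContinuousOn (fun θ : Fin 4 → ℝ => K1 (θ 2 - 1)) ThetaInt :=
  K1_cd.continuousOn.comp ceps fun _ hθ => epsm hθ
lemma cK2 : ContinuousOn (fun θ : Fin 4 → ℝ => K2 (θ 2 - 1)) ThetaInt :=
  K2_c.comp ceps fun _ hθ => epsm hθ
lemma c0 : ContinuousOn (fun _ : Fin 4 → ℝ => (1:ℝ)) ThetaInt := continuousOn_const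

lemma lcD1 : IsLC 0 D1 := by
  convert ((IsLC.P (k := 0) (m := 0) le_rfl (c2.mul c1) (-1)).add
    (IsLC.P (k := 0) (m := 0) le_rfl ((c3.mul c1).mul cK) (-Complex.I))).add
    (IsLC.X (k := 0) (j := 0) le_rfl ((c3.mul c1).mul cK).neg) using 3
  simp [D1]; ring

lemma lcD2 : IsLC 1 D2 := by
  convert ((IsLC.P (k := 1) (m := 1) le_rfl c0 (-1)).add
    (IsLC.X (k := 1) (j := 0) (by norm_num) (c3.mul cK1).neg)).add
    (IsLC.X (k := 1) (j := 1) le_rfl (c3.mul cK).neg) using 3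
  simp [D2]; ring

lemma lcD3 : IsLC 0 D3 := by
  convert (IsLC.X (k := 0) (j := 0) le_rfl cK.neg) using 3
  simp [D3]

lemma lcD11 : IsLC 0 D11 := by
  convert ((IsLC.P (k := 0) (m := 0) le_rfl ((c2.mul (c1.pow 2)).sub ((c2.pow 2).mul (c1.pow 2))) 1).add
    (IsLC.P (k := 0) (m := 0) le_rfl (((c3.mul (c1.pow 2)).mul cK).mul c2) (-Complex.I))).add
    (IsLC.X (k := 0) (j := 0) le_rfl (c0.sub c0)) using 3
  simp [D11]; ring

lemma lcD12 : IsLC 1 D12 := by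
  convert (((IsLC.P (k := 1) (m := 0) (by norm_num) c1 (-1)).add
    (IsLC.P (k := 1) (m := 1) le_rfl (c2.mul c1) (-1))).add
    ((IsLC.P (k := 1) (m := 0) (by norm_num) ((c3.mul c1).mul cK1) (-Complex.I)).add
    (IsLC.P (k := 1) (m := 1) le_rfl ((c3.mul c1).mul cK) (-Complex.I)))).add
    ((IsLC.X (k := 1) (j := 0) (by norm_num) ((c3.mul c1).mul cK1).neg).add
    (IsLC.X (k := 1) (j := 1) le_rfl ((c3.mul c1).mul cK).neg)) using 3
  simp [D12]; ring

lemma lcD13 : IsLC 0 D13 := by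
  convert (IsLC.P (k := 0) (m := 0) le_rfl (c1.mul cK) (-Complex.I)).add
    (IsLC.X (k := 0) (j := 0) le_rfl (c1.mul cK).neg) using 3
  simp [D13]; ring

lemma lcD22 : IsLC 2 D22 := by
  convert ((IsLC.P (k := 2) (m := 2) le_rfl c0 (-1)).add
    (IsLC.X (k := 2) (j := 0) (by norm_num) (c3.mul cK2).neg)).add
    ((IsLC.X (k := 2) (j := 1) (by norm_num) (((c0.add c0).mul c3).mul cK1).neg).add
    (IsLC.X (k := 2) (j := 2) le_rfl (c3.mul cK).neg)) using 3
  simp [D22]; ring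

lemma lcD23 : IsLC 1 D23 := by
  convert (IsLC.X (k := 1) (j := 0) (by norm_num) cK1.neg).add
    (IsLC.X (k := 1) (j := 1) le_rfl cK.neg) using 3
  simp [D23]; ring

lemma lcD33 : IsLC 0 D33 := by
  convert (IsLC.P (k := 0) (m := 0) le_rfl c0 0) using 3
  simp [D33]

lemma fP_eq {j : Fin 4} {p : Fam} (hp : Good p) (dp : IsD j Psi p) {θ : Fin 4 → ℝ} (hθ : θ ∈ ThetaInt) (x : ℝ) :
    fP j θ x = (1 / Real.pi) * (Jq p θ x).re := by
  have h := Jq_deriv j (Good.const 1) (Good.const 0) hp (IsD_one j) dp hθ x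
  have h1 := (Complex.reCLM.hasFDerivAt.comp_hasDerivAt (θ j) h).const_mul (1 / Real.pi)
  have h2 : (fun s => fM (Function.update θ j s) x) =ᶠ[nhds (θ j)]
      fun s => (1 / Real.pi) * (Jq (fun _ _ => 1) (Function.update θ j s) x).re := by
    filter_upwards [(upd_cont θ j).eventually (ThetaInt_open.eventually_mem hθ)] with s hs using fM_eq hs x
  unfold fP
  rw [h2.deriv_eq]
  refine Eq.trans h1.deriv ?_
  simp

lemma fPP_eq {i j : Fin 4} {p p' q : Fam} (hp : Good p) (hp' : Good p') (hq : Good q)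
    (dp : IsD i Psi p) (dq : IsD j Psi q) (dp' : IsD j p p') {θ : Fin 4 → ℝ} (hθ : θ ∈ ThetaInt) (x : ℝ) :
    fPP i j θ x = (1 / Real.pi) * (Jq (fun θ t => q θ t * p θ t + p' θ t) θ x).re := by
  have h := Jq_deriv j hp hp' hq dp' dq hθ x
  have h1 := (Complex.reCLM.hasFDerivAt.comp_hasDerivAt (θ j) h).const_mul (1 / Real.pi)
  have h2 : (fun s => fP i (Function.update θ j s) x) =ᶠ[nhds (θ j)]
      fun s => (1 / Real.pi) * (Jq p (Function.update θ j s) x).re := by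
    filter_upwards [(upd_cont θ j).eventually (ThetaInt_open.eventually_mem hθ)] with s hs using fP_eq hp dp hs x
  unfold fPP
  rw [h2.deriv_eq]
  exact h1.deriv

end PsiD

noncomputable section Fin9

def m0 (a : ℝ) (k : ℕ) : ℕ := if a = 1 then k + 1 else 0

/-- `h = I c t log^{m0} t + ` symbol of order `(a,k)`. -/
def Form (a : ℝ) (k : ℕ) (h : ℝ → ℂ) : Prop :=
  ∃ c : ℝ, SymB 3 a k 0 (fun (_ : Unit) (t : ℝ) => h t - Complex.I * ((c : ℂ) * ((t : ℂ) * ((Real.log t : ℝ) : ℂ) ^ m0 a k)))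

lemma tlog_sym (n m : ℕ) : SymB n 1 m 0 (fun (_ : Unit) (t : ℝ) => (t : ℂ) * ((Real.log t : ℝ) : ℂ) ^ m) := by
  simpa using (SymB.id (ι := Unit) n).mul (SymB.logpow n m)

lemma Form.of_sym {a : ℝ} {k : ℕ} {h : ℝ → ℂ} (hh : SymB 3 a k 0 (fun (_ : Unit) => h)) : Form a k h :=
  ⟨0, hh.congr fun _ t _ => by simp⟩

lemma Form.add {a : ℝ} {k : ℕ} {h g : ℝ → ℂ} (hh : Form a k h) (hg : Form a k g) :
    Form a k (fun t => h t + g t) := by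
  obtain ⟨c, hc⟩ := hh
  obtain ⟨d, hd⟩ := hg
  refine ⟨c + d, (hc.add hd).congr fun _ t _ => ?_⟩
  push_cast; ring

lemma Form.weak {a : ℝ} {k : ℕ} {h : ℝ → ℂ} (hh : Form a k h) {b : ℝ} (hb1 : b < 1) (hba : b < a) :
    ∃ N, SymB 3 b 0 N (fun (_ : Unit) => h) := by
  obtain ⟨c, hc⟩ := hh
  have h1 := hc.mono_a hba
  have h2 := (((tlog_sym 3 (m0 a k)).mono_a hb1).const_mul (c:ℂ)).const_mul Complex.I
  refine ⟨max (0 + 2 * (a - b)) (0 + 2 * (1 - b)), ((h1.mono_k le_rfl (le_max_left _ _)).add (h2.mono_k le_rfl (le_max_right _ _))).congr fun _ t _ => ?_⟩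
  ring

lemma Lf_eq {θ : Fin 4 → ℝ} (hθ : θ ∈ ThetaInt) {t : ℝ} (ht : 0 < t) :
    Lf θ t = Real.log (θ 1) + Real.log t := Real.log_mul hθ.1.ne' ht.ne'

lemma Lf_pow_sym {θ : Fin 4 → ℝ} (hθ : θ ∈ ThetaInt) (m : ℕ) :
    SymB 3 0 m 0 (fun (_ : Unit) (t : ℝ) => ((Lf θ t : ℝ) : ℂ) ^ m) := by
  induction m with
  | zero => simpa using SymB.const 3 1
  | succ m ih =>
    have h1 : SymB 3 0 1 0 (fun (_ : Unit) (t : ℝ) => ((Lf θ t : ℝ) : ℂ)) :=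
      (((SymB.const 3 (Real.log (θ 1) : ℂ)).mono_k (Nat.zero_le 1) le_rfl).add (SymB.log 3)).congr
        fun _ t ht => by rw [Lf_eq hθ ht]; push_cast; ring
    simpa [pow_succ] using ih.mul h1

lemma Lf_pow_sub {θ : Fin 4 → ℝ} (hθ : θ ∈ ThetaInt) (m : ℕ) :
    SymB 3 0 m 0 (fun (_ : Unit) (t : ℝ) => ((Lf θ t : ℝ) : ℂ) ^ (m+1) - ((Real.log t : ℝ) : ℂ) ^ (m+1)) := by
  induction m with
  | zero =>
    refine (SymB.const 3 (Real.log (θ 1) : ℂ)).congr fun _ t ht => ?_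
    rw [Lf_eq hθ ht]; push_cast; ring
  | succ m ih =>
    have h1 := (Lf_pow_sym hθ 1).mul ih
    have h2 := (SymB.logpow (ι := Unit) 3 (m+1)).const_mul (Real.log (θ 1) : ℂ)
    rw [add_zero, add_comm 1 m] at h1
    refine (h1.add h2).congr fun _ t ht => ?_
    rw [Lf_eq hθ ht]; push_cast; ring

lemma Pm_sym {θ : Fin 4 → ℝ} (hθ : θ ∈ ThetaInt) (m : ℕ) :
    SymB 3 (θ 2) m 0 (fun (_ : Unit) (t : ℝ) => (Pm m θ t : ℂ)) := by
  have h1 := (Lf_pow_sym hθ m).mul ((SymB.rpow (ι := Unit) 3 (θ 2)).const_mul ((θ 1 ^ θ 2 : ℝ) : ℂ))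
  rw [zero_add, add_zero, add_zero] at h1
  refine h1.congr fun _ t ht => ?_
  have : Real.exp (θ 2 * Lf θ t) = θ 1 ^ θ 2 * t ^ θ 2 := by
    rw [← Real.mul_rpow hθ.1.le ht.le, Real.rpow_def_of_pos (mul_pos hθ.1 ht), Lf, mul_comm]
  rw [Pm, this]; push_cast; ring

lemma expLf {θ : Fin 4 → ℝ} (hθ : θ ∈ ThetaInt) {t : ℝ} (ht : 0 < t) : Real.exp (Lf θ t) = θ 1 * t :=
  Real.exp_log (mul_pos hθ.1 ht)

lemma Xj_ne {θ : Fin 4 → ℝ} (hθ : θ ∈ ThetaInt) (hne : θ 2 ≠ 1) {j : ℕ} (hj : j ≤ 2) :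
    ∃ c : ℝ, SymB 3 (θ 2) j 0 (fun (_ : Unit) (t : ℝ) => (Xj j θ t : ℂ) - (c : ℂ) * t) := by
  have he : θ 2 - 1 ≠ 0 := sub_ne_zero.2 hne
  have hexp : ∀ t, Real.exp (θ 2 * Lf θ t) = Real.exp (Lf θ t) * Real.exp ((θ 2 - 1) * Lf θ t) := fun t => by
    rw [← Real.exp_add]; ring_nf
  have r0 : ∀ t, 0 < t → Xj 0 θ t = (θ 2 - 1)⁻¹ * (Pm 0 θ t - θ 1 * t) := fun t ht => by
    rw [eq_inv_mul_iff_mul_eq₀ he, ← expLf hθ ht]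
    simp only [Xj, Pm, hexp]
    linear_combination Real.exp (Lf θ t) * En_id0 ((θ 2 - 1) * Lf θ t)
  have r1 : ∀ t, Xj 1 θ t = (θ 2 - 1)⁻¹ * (Pm 1 θ t - Xj 0 θ t) := fun t => by
    rw [eq_inv_mul_iff_mul_eq₀ he]
    simp only [Xj, Pm, hexp]
    linear_combination Real.exp (Lf θ t) * Lf θ t * En_id1 ((θ 2 - 1) * Lf θ t)
  have r2 : ∀ t, Xj 2 θ t = (θ 2 - 1)⁻¹ * (Pm 2 θ t - 2 * Xj 1 θ t) := fun t => by
    rw [eq_inv_mul_iff_mul_eq₀ he]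
    simp only [Xj, Pm, hexp]
    linear_combination Real.exp (Lf θ t) * Lf θ t ^ 2 * En_id2 ((θ 2 - 1) * Lf θ t)
  have s0 : SymB 3 (θ 2) 0 0 (fun (_ : Unit) (t : ℝ) => (Xj 0 θ t : ℂ) - ((-((θ 2 - 1)⁻¹ * θ 1) : ℝ) : ℂ) * t) := by
    refine ((Pm_sym hθ 0).const_mul (((θ 2 - 1)⁻¹ : ℝ) : ℂ)).congr fun _ t ht => ?_
    rw [r0 t ht]; push_cast; ring
  have s1 : SymB 3 (θ 2) 1 0 (fun (_ : Unit) (t : ℝ) => (Xj 1 θ t : ℂ) - (((θ 2 - 1)⁻¹ ^ 2 * θ 1 : ℝ) : ℂ) * t) := by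
    refine (((Pm_sym hθ 1).sub (s0.mono_k (Nat.zero_le 1) le_rfl)).const_mul (((θ 2 - 1)⁻¹ : ℝ) : ℂ)).congr fun _ t ht => ?_
    rw [r1 t]; push_cast; ring
  have s2 : SymB 3 (θ 2) 2 0 (fun (_ : Unit) (t : ℝ) => (Xj 2 θ t : ℂ) - ((-2 * (θ 2 - 1)⁻¹ ^ 3 * θ 1 : ℝ) : ℂ) * t) := by
    refine (((Pm_sym hθ 2).sub ((s1.mono_k (by norm_num : 1 ≤ 2) le_rfl).const_mul 2)).const_mul (((θ 2 - 1)⁻¹ : ℝ) : ℂ)).congr fun _ t ht => ?_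
    rw [r2 t]; push_cast; ring
  interval_cases j
  exacts [⟨_, s0⟩, ⟨_, s1⟩, ⟨_, s2⟩]

lemma Xj_form {θ : Fin 4 → ℝ} (hθ : θ ∈ ThetaInt) {j k : ℕ} (hjk : j ≤ k) (hk : k ≤ 2) (f : ℝ) :
    Form (θ 2) k (fun t => Complex.I * ((f : ℂ) * (Xj j θ t : ℂ))) := by
  by_cases hne : θ 2 = 1
  · have hX : ∀ t, 0 < t → (Xj j θ t : ℂ) = ((θ 1 / (j+1) : ℝ) : ℂ) * ((t : ℂ) * ((Lf θ t : ℝ) : ℂ) ^ (j+1)) := fun t ht => by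
      rw [Xj, hne, sub_self, zero_mul, En_zero, expLf hθ ht]; push_cast; ring
    have hs := (SymB.id (ι := Unit) 3).mul (Lf_pow_sub hθ j)
    rw [add_zero, add_zero, zero_add, ← hne] at hs
    have hs1 := (hs.const_mul ((θ 1 / (j+1) : ℝ) : ℂ)).const_mul (Complex.I * f)
    rcases hjk.eq_or_lt with rfl | hlt
    · refine ⟨f * (θ 1 / (j+1)), hs1.congr fun _ t ht => ?_⟩
      beta_reduce; rw [hX t ht, m0, if_pos hne]; push_cast; ring
    · apply Form.of_sym
      have hs2 := ((tlog_sym 3 (j+1)).const_mul ((θ 1 / (j+1) : ℝ) : ℂ)).const_mul (Complex.I * f)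
      have hs2' := hs2.mono_k (k' := k) hlt le_rfl
      have hs3 := hne.symm.rec (motive := fun a _ => SymB 3 a k 0 (fun (_ : Unit) (t : ℝ) => Complex.I * (f:ℂ) * (((θ 1 / ((j:ℝ) + 1) : ℝ) : ℂ) * ((t:ℂ) * ((Real.log t : ℝ) : ℂ) ^ (j + 1))))) hs2'
      refine ((hs1.mono_k hlt.le le_rfl).add hs3).congr fun _ t ht => ?_
      rw [hX t ht]; push_cast; ring
  · obtain ⟨c, hc⟩ := Xj_ne hθ hne (hjk.trans hk)
    refine ⟨f * c, ((hc.const_mul (Complex.I * f)).mono_k hjk le_rfl).congr fun _ t ht => ?_⟩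
    rw [m0, if_neg hne]; push_cast; ring

lemma IsLC.form {k : ℕ} {q : Fam} (h : IsLC k q) (hk : k ≤ 2) {θ : Fin 4 → ℝ} (hθ : θ ∈ ThetaInt) :
    Form (θ 2) k (q θ) := by
  induction h with
  | P hm hf c =>
    exact Form.of_sym ((((Pm_sym hθ _).const_mul _).const_mul _).mono_k hm le_rfl)
  | X hj hf => exact Xj_form hθ hj hk _
  | add _ _ h1 h2 => exact h1.add h2

lemma Psi_weak {θ : Fin 4 → ℝ} (hθ : θ ∈ ThetaInt) {b : ℝ} (hb1 : b < 1) (hba : b < θ 2) :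
    ∃ N, SymB 3 b 0 N (fun (_ : Unit) => Psi θ) := by
  have h1 : IsLC 0 (fun θ t => -1 * (((1:ℝ) : ℂ) * (Pm 0 θ t : ℂ)) + Complex.I * (((-(θ 3 * Kf (θ 2 - 1)) : ℝ) : ℂ) * (Xj 0 θ t : ℂ))) :=
    (IsLC.P (k := 0) (m := 0) le_rfl c0 (-1)).add (IsLC.X (k := 0) (j := 0) le_rfl (c3.mul cK).neg)
  obtain ⟨N, hN⟩ := (h1.form (by norm_num) hθ).weak hb1 hba
  have h2 := ((SymB.id (ι := Unit) 3).mono_a hb1).const_mul (Complex.I * θ 0)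
  refine ⟨max N (0 + 2 * (1 - b)), ((hN.mono_k le_rfl (le_max_left _ _)).add (h2.mono_k le_rfl (le_max_right _ _))).congr fun _ t _ => ?_⟩
  simp only [Psi]; push_cast; ring

lemma Psi_bdW {θ : Fin 4 → ℝ} (hθ : θ ∈ ThetaInt) (N : ℝ) :
    BdW 0 0 N (fun (_ : Unit) t => Complex.exp (Psi θ t)) := by
  obtain ⟨C, _, h⟩ := Psi_decay hθ N
  exact ⟨C, fun _ t ht => by simpa [wt] using h.self_of_nhds t ht⟩

lemma sym_int {a : ℝ} (ha0 : 0 < a) (ha2 : a < 2) {k : ℕ} {g : ℝ → ℂ}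
    (hg : ∀ N, SymB 3 a k N (fun _ : Unit => g)) (x : ℝ) :
    IntegrableOn (fun t : ℝ => Complex.exp (-Complex.I * t * x) * g t) (Set.Ioi 0) := by
  obtain ⟨C, hC⟩ := tail_zero ha0 ha2 (hg 0) (fun _ => ⟨-(k+4), le_rfl, hg _⟩)
  have h1 := (hC () 1 (by simp)).1
  refine Integrable.bdd_mul (c := 1) h1 ?_ ?_
  · exact (by fun_prop : Continuous fun t : ℝ => Complex.exp (-Complex.I * t * x)).aestronglyMeasurable
  · exact Eventually.of_forall fun t => (norm_osc x t).le

lemma special_all {a : ℝ} (ha2 : a < 2) (k : ℕ) : ∃ C : ℝ, 0 ≤ C ∧ ∀ x : ℝ, 1 ≤ |x| →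
    |(Complex.I * ∫ t in Set.Ioi (0:ℝ), Complex.exp (-Complex.I * t * x) *
      ((t : ℂ) * ((Real.log t : ℝ) : ℂ) ^ (m0 a k) * Complex.exp (-(t:ℂ)))).re| ≤
      C * (|x| ^ (-(1 + a)) * (1 + Real.log |x|) ^ k) := by
  by_cases h : a = 1
  · obtain ⟨C, hC, hx⟩ := special_log k
    refine ⟨C, hC, fun x h1 => ?_⟩
    have := hx x h1
    rw [m0, if_pos h, h, show -(1 + 1 : ℝ) = -2 by norm_num]
    exact this
  · refine ⟨2, by norm_num, fun x h1 => ?_⟩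
    have := special_zero x h1
    simp only [m0, if_neg h, pow_zero, mul_one]
    refine this.trans ?_
    have e1 : |x| ^ (-3 : ℝ) ≤ |x| ^ (-(1+a)) := Real.rpow_le_rpow_of_exponent_le h1 (by linarith)
    have e2 : (1:ℝ) ≤ (1 + Real.log |x|) ^ k := one_le_pow₀ (by linarith [Real.log_nonneg h1])
    have e3 : 0 ≤ |x| ^ (-(1+a)) := by positivity
    nlinarith

lemma main_tail {θ : Fin 4 → ℝ} (hθ : θ ∈ ThetaInt) {p q r : Fam} {kp kq k : ℕ} (hp : IsLC kp p) (hq : IsLC kq q)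
    (hr : IsLC k r) (hkp : kp ≤ 2) (hkq : kq ≤ 2) (hk : k ≤ 2) : ∃ C : ℝ, 0 ≤ C ∧ ∀ x : ℝ, 1 ≤ |x| →
      |(Jq (fun θ t => q θ t * p θ t + r θ t) θ x).re| ≤ C * (|x| ^ (-(1 + θ 2)) * (1 + Real.log |x|) ^ k) := by
  have ha0 := hθ.2.1.1
  have ha2 := hθ.2.1.2
  set a := θ 2 with ha
  obtain ⟨b, hb, hb'⟩ := exists_between (show a / 2 < min 1 a by rw [lt_min_iff]; constructor <;> linarith)
  obtain ⟨hb1, hba⟩ := lt_min_iff.1 hb'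
  have hb0 : 0 ≤ b := by linarith
  obtain ⟨Np, sp⟩ := (hp.form hkp hθ).weak hb1 hba
  obtain ⟨Nq, sq⟩ := (hq.form hkq hθ).weak hb1 hba
  obtain ⟨Nr, sr⟩ := (hr.form hk hθ).weak hb1 hba
  obtain ⟨N0, sψ⟩ := Psi_weak hθ hb1 hba
  obtain ⟨c, hc⟩ := hr.form hk hθ
  have sφ := SymB.exp hb0 sψ (Psi_bdW hθ)
  have sl := (expneg_lin 3 1).mono_a hb1
  have sd : ∀ N, SymB 3 b 0 N (fun (_ : Unit) t => Complex.exp (Psi θ t) - Complex.exp (-((1 * t : ℝ) : ℂ))) := 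
    SymB.exp_sub hb0 (sψ.mono_k le_rfl (le_max_left N0 (0 + 2 * (1 - b)))) (sl.mono_k le_rfl (le_max_right _ _))
      (Psi_bdW hθ) (expneg_bd one_pos) (fun _ t _ => by
        have : 0 ≤ Pm 0 θ t := by simp [Pm]; positivity
        simpa [Psi] using this) (fun _ t ht => by simpa using ht.le)
  have up : ∀ {g : ℝ → ℂ}, (∀ N, SymB 3 (b + b) 0 N (fun _ : Unit => g)) → ∀ N, SymB 3 a k N (fun _ : Unit => g) := by
    intro g hg N
    have := (hg (N - 2 * (b + b - a))).mono_a (show a < b + b by linarith)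
    exact this.mono_k (Nat.zero_le k) (by linarith)
  have g1 : ∀ N, SymB 3 a k N (fun _ : Unit => fun t => Complex.exp (Psi θ t) * (q θ t * p θ t)) := up fun N => by
    have := (sφ (N - (Nq + Np))).mul (sq.mul sp)
    simpa using this
  have g2 : ∀ N, SymB 3 a k N (fun _ : Unit => fun t => (Complex.exp (Psi θ t) - Complex.exp (-((1 * t : ℝ) : ℂ))) * r θ t) := up fun N => by
    have := (sd (N - Nr)).mul sr
    simpa using this
  have g3 : ∀ N, SymB 3 a k N (fun _ : Unit => fun t => Complex.exp (-((1 * t : ℝ) : ℂ)) *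
      (r θ t - Complex.I * ((c : ℂ) * ((t : ℂ) * ((Real.log t : ℝ) : ℂ) ^ m0 a k)))) := fun N => by
    have := (expneg_sym 3 one_pos N).mul hc
    simpa using this
  set G : ℝ → ℂ := fun t => Complex.exp (Psi θ t) * (q θ t * p θ t) + 
    (Complex.exp (Psi θ t) - Complex.exp (-((1 * t : ℝ) : ℂ))) * r θ t + Complex.exp (-((1 * t : ℝ) : ℂ)) *
      (r θ t - Complex.I * ((c : ℂ) * ((t : ℂ) * ((Real.log t : ℝ) : ℂ) ^ m0 a k))) with hG
  have sG : ∀ N, SymB 3 a k N (fun _ : Unit => G) := fun N => ((g1 N).add (g2 N)).add (g3 N)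
  set S : ℝ → ℂ := fun t => (t : ℂ) * ((Real.log t : ℝ) : ℂ) ^ m0 a k * Complex.exp (-(t:ℂ)) with hS
  have sS : ∀ N, SymB 3 1 (m0 a k) N (fun _ : Unit => S) := fun N => by
    have := (tlog_sym 3 (m0 a k)).mul (expneg_sym 3 one_pos N)
    simpa using this
  obtain ⟨C1, hC1, h1⟩ := tail_sym ha0 ha2 sG
  obtain ⟨C2, hC2, h2⟩ := special_all ha2 k
  refine ⟨C1 + |c| * C2, by positivity, fun x hx => ?_⟩
  have hJ : Jq (fun θ t => q θ t * p θ t + r θ t) θ x = (∫ t in Set.Ioi (0:ℝ), Complex.exp (-Complex.I * t * x) * G t)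
      + (c : ℂ) * (Complex.I * ∫ t in Set.Ioi (0:ℝ), Complex.exp (-Complex.I * t * x) * S t) := by
    rw [← mul_assoc, ← integral_const_mul, ← integral_add (sym_int ha0 ha2 sG x)
      ((sym_int one_pos one_lt_two sS x).const_mul _)]
    unfold Jq
    congr 1; ext t
    simp only [hG, hS, one_mul]; ring
  rw [hJ, Complex.add_re, Complex.re_ofReal_mul]
  refine (abs_add_le _ _).trans ?_
  rw [abs_mul, add_mul, mul_assoc]
  exact add_le_add ((Complex.abs_re_le_norm _).trans (h1 x hx)) (mul_le_mul_of_nonneg_left (h2 x hx) (abs_nonneg _))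

lemma final_bd {θ : Fin 4 → ℝ} (hθ : θ ∈ ThetaInt) {i j : Fin 4} {p q r : Fam} {kp kq k : ℕ} (hp : IsLC kp p) (hq : IsLC kq q)
    (hr : IsLC k r) (hkp : kp ≤ 2) (hkq : kq ≤ 2) (hk : k ≤ 2)
    (dp : IsD i Psi p) (dq : IsD j Psi q) (dr : IsD j p r) :
    IsBigOAtInfty (fPP i j θ) (fun x => |x| ^ (-(1 + θ 2)) * (Real.log |x|) ^ k) := by
  obtain ⟨C, hC, h⟩ := main_tail hθ hp hq hr hkp hkq hk
  refine ⟨(1 / Real.pi) * (C * 2 ^ k) + 1, by positivity, Real.exp 1, Real.exp_pos 1, fun x hx => ?_⟩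
  have h1 : 1 ≤ |x| := le_trans (by linarith [Real.add_one_le_exp 1]) hx
  have h0 : 0 < |x| := by linarith
  have hl : 1 ≤ Real.log |x| := by rwa [Real.le_log_iff_exp_le h0]
  rw [fPP_eq hp.good hr.good hq.good dp dq dr hθ x, abs_mul, abs_of_pos (by positivity : 0 < 1 / Real.pi)]
  have h2 : (1 + Real.log |x|) ^ k ≤ 2 ^ k * (Real.log |x|) ^ k := by
    rw [← mul_pow]; gcongr; linarith
  have h3 : 0 ≤ |x| ^ (-(1 + θ 2)) * (Real.log |x|) ^ k := by positivity
  calc _ ≤ (1 / Real.pi) * (C * (|x| ^ (-(1 + θ 2)) * (1 + Real.log |x|) ^ k)) := by gcongr; exact h x h1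
    _ ≤ (1 / Real.pi) * (C * (|x| ^ (-(1 + θ 2)) * (2 ^ k * (Real.log |x|) ^ k))) := by gcongr
    _ ≤ _ := by beta_reduce; linarith

end Fin9

/-- Tail behavior of the second-order parameter derivatives of the density:
`f_{σσ} = O(|x|^{-(1+α)})`, `f_{σα} = O(|x|^{-(1+α)} log|x|)`, `f_{σβ} = O(|x|^{-(1+α)})`,
`f_{αα} = O(|x|^{-(1+α)} log²|x|)`, `f_{αβ} = O(|x|^{-(1+α)} log|x|)`,
`f_{ββ} = O(|x|^{-(1+α)})`. -/
theorem density_second_deriv_tail_bounds (θ : Fin 4 → ℝ) (hθ : θ ∈ ThetaInt) :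
    IsBigOAtInfty (fPP 1 1 θ) (fun x => |x| ^ (-(1 + θ 2))) ∧
    IsBigOAtInfty (fPP 1 2 θ) (fun x => |x| ^ (-(1 + θ 2)) * Real.log |x|) ∧
    IsBigOAtInfty (fPP 1 3 θ) (fun x => |x| ^ (-(1 + θ 2))) ∧
    IsBigOAtInfty (fPP 2 2 θ) (fun x => |x| ^ (-(1 + θ 2)) * (Real.log |x|) ^ 2) ∧
    IsBigOAtInfty (fPP 2 3 θ) (fun x => |x| ^ (-(1 + θ 2)) * Real.log |x|) ∧
    IsBigOAtInfty (fPP 3 3 θ) (fun x => |x| ^ (-(1 + θ 2))) := by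
  have h11 := final_bd hθ lcD1 lcD1 lcD11 (by norm_num) (by norm_num) (by norm_num) dPsi1 dPsi1 dD11
  have h12 := final_bd hθ lcD1 lcD2 lcD12 (by norm_num) (by norm_num) (by norm_num) dPsi1 dPsi2 dD12
  have h13 := final_bd hθ lcD1 lcD3 lcD13 (by norm_num) (by norm_num) (by norm_num) dPsi1 dPsi3 dD13
  have h22 := final_bd hθ lcD2 lcD2 lcD22 (by norm_num) (by norm_num) (by norm_num) dPsi2 dPsi2 dD22
  have h23 := final_bd hθ lcD2 lcD3 lcD23 (by norm_num) (by norm_num) (by norm_num) dPsi2 dPsi3 dD23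
  have h33 := final_bd hθ lcD3 lcD3 lcD33 (by norm_num) (by norm_num) (by norm_num) dPsi3 dPsi3 dD33
  simp only [pow_zero, pow_one, mul_one] at h11 h12 h13 h23 h33
  exact ⟨h11, h12, h13, h22, h23, h33⟩
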